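/- arXiv:2505.01611 — 4 statements merged into one kernel-verified Lean document; each statement's English description precedes it below -/
import Mathlib

section
/- Let w_max and w_min be, respectively, the largest and the smallest width of Ω over all directions. Then sup{ ‖u_{h₁}‖₁ / ‖u_{h₂}‖₁ : u ∈ 𝒰_Ω, u ≢ 0, h₁, h₂ unit vectors } = 2 w_max / w_min if and only if there exist a unit vector h₁ realizing the width w_max and a unit vector h₂ realizing the width w_min such that h₁ and h₂ are orthogonal. -/
open Set MeasureTheory
open scoped ENNReal

/-- Partial derivative of `u` in the `x` direction (junk value where `u` is not
differentiable). -/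
noncomputable def ux (u : ℝ × ℝ → ℝ) (z : ℝ × ℝ) : ℝ := fderiv ℝ u z (1, 0)

/-- Partial derivative of `u` in the `y` direction. -/
noncomputable def uy (u : ℝ × ℝ → ℝ) (z : ℝ × ℝ) : ℝ := fderiv ℝ u z (0, 1)

/-- Directional derivative of `u` in the direction `h`. -/
noncomputable def uh (h : ℝ × ℝ) (u : ℝ × ℝ → ℝ) (z : ℝ × ℝ) : ℝ := fderiv ℝ u z h

/-- The class `𝒰_Ω`: continuous concave functions on `Ω` vanishing on the boundary,
with uniformly bounded gradient over all interior points where it exists. -/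
def MemU (Ω : Set (ℝ × ℝ)) (u : ℝ × ℝ → ℝ) : Prop :=
  ContinuousOn u Ω ∧ ConcaveOn ℝ Ω u ∧ (∀ z ∈ frontier Ω, u z = 0) ∧
    ∃ C : ℝ, ∀ z ∈ interior Ω, ∀ g : (ℝ × ℝ) →L[ℝ] ℝ, HasFDerivAt u g z → ‖g‖ ≤ C

/-- The `L¹` norm of `f` over `Ω`. -/
noncomputable def L1N (Ω : Set (ℝ × ℝ)) (f : ℝ × ℝ → ℝ) : ℝ := ∫ z in Ω, |f z|

/-- The `L^p` norm of `f` over `Ω`, `p ∈ [1, ∞)`. -/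
noncomputable def LpN (Ω : Set (ℝ × ℝ)) (p : ℝ) (f : ℝ × ℝ → ℝ) : ℝ :=
  (∫ z in Ω, |f z| ^ p) ^ (1 / p)

/-- The `L^∞` norm (essential supremum) of `f` over `Ω`. -/
noncomputable def LinfN (Ω : Set (ℝ × ℝ)) (f : ℝ × ℝ → ℝ) : ℝ≥0∞ :=
  essSup (fun z => ENNReal.ofReal |f z|) (volume.restrict Ω)

/-- The width of `Ω` parallel to the (Euclidean unit) vector `h`: the distance between the
two lines of support of `Ω` parallel to `h`, i.e. the oscillation over `Ω` of the linear
functional given by the unit normal `(-h.2, h.1)` to `h`. -/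
noncomputable def widthPar (Ω : Set (ℝ × ℝ)) (h : ℝ × ℝ) : ℝ :=
  sSup ((fun z : ℝ × ℝ => -h.2 * z.1 + h.1 * z.2) '' Ω) -
    sInf ((fun z : ℝ × ℝ => -h.2 * z.1 + h.1 * z.2) '' Ω)

theorem lintegral_enorm_of_monotoneOn {f f' g : ℝ → ℝ} {a b : ℝ} (hab : a ≤ b)
    (hf : ContinuousOn f (Icc a b)) (hmono : MonotoneOn f (Icc a b))
    (hf' : ∀ x ∈ Ioo a b, HasDerivWithinAt f (f' x) (Ioi x) x)
    (hg : ∀ᵐ x, x ∈ Ioo a b → HasDerivAt f (g x) x) :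
    ∫⁻ x in Ioo a b, ‖g x‖ₑ = ENNReal.ofReal (f b - f a) := by
  have hpos : ∀ x ∈ Ioo a b, 0 ≤ f' x := by
    intro x hx
    have h1 : HasDerivWithinAt f (f' x) (Ioo x b) x :=
      (hf' x hx).mono Ioo_subset_Ioi_self
    have hne : (nhdsWithin x (Ioo x b)).NeBot := by
      rw [nhdsWithin_Ioo_eq_nhdsGT hx.2]; infer_instance
    rw [hasDerivWithinAt_iff_tendsto_slope' (by simp)] at h1
    refine ge_of_tendsto h1 ?_
    filter_upwards [self_mem_nhdsWithin] with y hy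
    rw [slope_def_field]
    exact div_nonneg (sub_nonneg.2 (hmono ⟨hx.1.le, hx.2.le⟩
      ⟨hx.1.le.trans hy.1.le, hy.2.le⟩ hy.1.le)) (sub_nonneg.2 hy.1.le)
  have hinteg := intervalIntegral.integrableOn_deriv_right_of_nonneg hf hf' hpos
  have hval := intervalIntegral.integral_eq_sub_of_hasDeriv_right_of_le hab hf hf'
    ((intervalIntegrable_iff_integrableOn_Ioc_of_le hab).2 hinteg)
  rw [intervalIntegral.integral_of_le hab, integral_Ioc_eq_integral_Ioo] at hval
  rw [← hval, ofReal_integral_eq_lintegral_ofReal (hinteg.mono_set Ioo_subset_Ioc_self)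
    ((ae_restrict_iff' measurableSet_Ioo).2 (.of_forall hpos))]
  refine setLIntegral_congr_fun_ae measurableSet_Ioo ?_
  filter_upwards [hg] with x hx hxm
  have : g x = f' x := (uniqueDiffWithinAt_Ioi x).eq_deriv _ (hx hxm).hasDerivWithinAt (hf' x hxm)
  rw [this, Real.enorm_eq_ofReal (hpos x hxm)]

theorem ConcaveOn.monotoneOn_of_isMaxOn_right {f : ℝ → ℝ} {a b p : ℝ}
    (hf : ConcaveOn ℝ (Icc a b) f) (hp : p ∈ Icc a b) (hmax : IsMaxOn f (Icc a b) p) :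
    MonotoneOn f (Icc a p) := by
  intro x hx y hy hxy
  rcases hy.2.eq_or_lt with rfl | hyp
  · exact hmax ⟨hx.1, hx.2.trans hp.2⟩
  rcases hxy.eq_or_lt with rfl | hxy
  · exact le_rfl
  have h := hf.min_le_of_mem_Icc (x := x) (y := p) (z := y) ⟨hx.1, hx.2.trans hp.2⟩ hp ⟨hxy.le, hy.2⟩
  rwa [min_eq_left (hmax ⟨hx.1, hx.2.trans hp.2⟩)] at h

theorem ConcaveOn.antitoneOn_of_isMaxOn_left {f : ℝ → ℝ} {a b p : ℝ}
    (hf : ConcaveOn ℝ (Icc a b) f) (hp : p ∈ Icc a b) (hmax : IsMaxOn f (Icc a b) p) :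
    AntitoneOn f (Icc p b) := by
  intro x hx y hy hxy
  have h := hf.min_le_of_mem_Icc (x := p) (y := y) (z := x) hp ⟨hp.1.trans hy.1, hy.2⟩ ⟨hx.1, hxy⟩
  rwa [min_eq_right (hmax ⟨hp.1.trans hy.1, hy.2⟩)] at h

theorem setLIntegral_Ioo_add {f : ℝ → ℝ≥0∞} {a b c : ℝ} (hab : a ≤ b) (hbc : b ≤ c) :
    ∫⁻ x in Ioo a c, f x = (∫⁻ x in Ioo a b, f x) + ∫⁻ x in Ioo b c, f x := by
  rw [← setLIntegral_congr Ioo_ae_eq_Ioc.symm, ← setLIntegral_congr Ioo_ae_eq_Ioc.symm,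
    ← setLIntegral_congr Ioo_ae_eq_Ioc.symm, ← Ioc_union_Ioc_eq_Ioc hab hbc]
  exact lintegral_union measurableSet_Ioc (Ioc_disjoint_Ioc_of_le le_rfl)

/-- The total variation of a concave function vanishing at both endpoints is twice its maximum. -/
theorem ConcaveOn.lintegral_enorm_deriv {f g : ℝ → ℝ} {a b p : ℝ}
    (hf : ConcaveOn ℝ (Icc a b) f) (hc : ContinuousOn f (Icc a b)) (ha : f a = 0) (hb : f b = 0)
    (hg : ∀ᵐ x, x ∈ Ioo a b → HasDerivAt f (g x) x)
    (hp : p ∈ Icc a b) (hmax : IsMaxOn f (Icc a b) p) :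
    ∫⁻ x in Ioo a b, ‖g x‖ₑ = ENNReal.ofReal (2 * f p) := by
  have hfp : 0 ≤ f p := ha ▸ hmax (left_mem_Icc.2 (hp.1.trans hp.2))
  have hder : ∀ x ∈ Ioo a b, HasDerivWithinAt (-f) (derivWithin (-f) (Ioi x) x) (Ioi x) x := by
    intro x hx
    exact hf.neg.hasDerivWithinAt_rightDeriv_of_mem_interior (by rwa [interior_Icc])
  have h1 := lintegral_enorm_of_monotoneOn (f := f) (f' := fun x => -derivWithin (-f) (Ioi x) x)
    (g := g) hp.1 (hc.mono (Icc_subset_Icc_right hp.2))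
    (hf.monotoneOn_of_isMaxOn_right hp hmax)
    (fun x hx => by simpa using (hder x ⟨hx.1, hx.2.trans_le hp.2⟩).neg)
    (by filter_upwards [hg] with x hx hxm using hx ⟨hxm.1, hxm.2.trans_le hp.2⟩)
  have h2 := lintegral_enorm_of_monotoneOn (f := -f) (f' := fun x => derivWithin (-f) (Ioi x) x)
    (g := fun x => -g x) hp.2 (hc.mono (Icc_subset_Icc_left hp.1)).neg
    (hf.antitoneOn_of_isMaxOn_left hp hmax).neg
    (fun x hx => hder x ⟨hp.1.trans_lt hx.1, hx.2⟩)
    (by filter_upwards [hg] with x hx hxm using (hx ⟨hp.1.trans_lt hxm.1, hxm.2⟩).neg)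
  simp only [enorm_neg, Pi.neg_apply, ha, hb] at h1 h2
  rw [setLIntegral_Ioo_add hp.1 hp.2, h1, h2, ← ENNReal.ofReal_add (by linarith) (by linarith)]
  congr 1; ring

theorem ConcaveOn.ae_differentiableAt_of_mem_interior {Ω : Set (ℝ × ℝ)} {u : ℝ × ℝ → ℝ}
    (hu : ConcaveOn ℝ Ω u) : ∀ᵐ z, z ∈ interior Ω → DifferentiableAt ℝ u z := by
  have hlip := hu.locallyLipschitzOn_interior
  suffices volume {z | z ∈ interior Ω ∧ ¬ DifferentiableAt ℝ u z} = 0 by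
    rw [ae_iff]; simpa using this
  refine measure_null_of_locally_null _ fun z hz => ?_
  obtain ⟨K, t, ht, hK⟩ := hlip hz.1
  rw [isOpen_interior.nhdsWithin_eq hz.1] at ht
  refine ⟨interior t ∩ {z | z ∈ interior Ω ∧ ¬ DifferentiableAt ℝ u z},
    Filter.inter_mem (mem_nhdsWithin_of_mem_nhds (interior_mem_nhds.2 ht)) self_mem_nhdsWithin, ?_⟩
  have h := (hK.mono interior_subset).ae_differentiableWithinAt_of_mem (μ := volume)
  rw [ae_iff] at h
  refine measure_mono_null ?_ h
  intro w hw hcon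
  exact hw.2.2 ((hcon hw.1).differentiableAt (isOpen_interior.mem_nhds hw.1))

/-- The linear functional given by the normal `(-h.2, h.1)` to `h`. -/
def normalForm (h z : ℝ × ℝ) : ℝ := -h.2 * z.1 + h.1 * z.2

/-- The linear map sending the standard basis to `h` and its normal `(-h.2, h.1)`. -/
noncomputable def frameMap (h : ℝ × ℝ) : ℝ × ℝ →ₗ[ℝ] ℝ × ℝ :=
  Matrix.toLin (Module.Basis.finTwoProd ℝ) (Module.Basis.finTwoProd ℝ) !![h.1, -h.2; h.2, h.1]

theorem frameMap_apply (h z : ℝ × ℝ) :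
    frameMap h z = (h.1 * z.1 + -h.2 * z.2, h.2 * z.1 + h.1 * z.2) :=
  Matrix.toLin_finTwoProd_apply _ _ _ _ _

theorem frameMap_mk (h : ℝ × ℝ) (s t : ℝ) :
    frameMap h (s, t) = t • (-h.2, h.1) + s • h := by
  rw [frameMap_apply]; ext <;> simp <;> ring

theorem measurePreserving_frameMap {h : ℝ × ℝ} (hh : h.1 ^ 2 + h.2 ^ 2 = 1) :
    MeasurePreserving (frameMap h) volume volume := by
  have hdet : LinearMap.det (frameMap h) = 1 := by
    rw [frameMap, LinearMap.det_toLin, Matrix.det_fin_two_of]; linarith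
  refine ⟨(LinearMap.continuous_of_finiteDimensional _).measurable, ?_⟩
  rw [Measure.map_linearMap_addHaar_eq_smul_addHaar _ (by rw [hdet]; exact one_ne_zero), hdet]
  simp

theorem exists_chord {Ω : Set (ℝ × ℝ)} (hΩc : IsCompact Ω) (hΩconv : Convex ℝ Ω)
    {q h : ℝ × ℝ} (hh : h ≠ 0) {s₀ : ℝ} (hs₀ : q + s₀ • h ∈ interior Ω) :
    ∃ a b : ℝ, a < b ∧ (∀ s, q + s • h ∈ Ω ↔ s ∈ Icc a b) ∧
      (∀ s, q + s • h ∈ interior Ω ↔ s ∈ Ioo a b) := by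
  set γ : ℝ → ℝ × ℝ := fun s => q + s • h with hγ
  have hcont : Continuous γ := by fun_prop
  have hγline : ∀ s, γ s = AffineMap.lineMap q (q + h) s := by
    intro s; simp [hγ, AffineMap.lineMap_apply, add_comm]
  have hTconv : Convex ℝ (γ ⁻¹' Ω) := by
    have := hΩconv.affine_preimage (AffineMap.lineMap q (q + h) : ℝ →ᵃ[ℝ] ℝ × ℝ)
    rwa [← show γ = _ from funext hγline] at this
  have hT : IsCompact (γ ⁻¹' Ω) := by
    have hemb : Topology.IsClosedEmbedding γ :=
      (Homeomorph.addLeft q).isClosedEmbedding.comp (isClosedEmbedding_smul_left hh)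
    exact hemb.isCompact_preimage hΩc
  have hTne : (γ ⁻¹' Ω).Nonempty := ⟨s₀, show γ s₀ ∈ Ω from interior_subset hs₀⟩
  obtain ⟨a, b, hT'⟩ : ∃ a b, γ ⁻¹' Ω = Icc a b :=
    ⟨_, _, eq_Icc_of_connected_compact ⟨hTne, hTconv.isPreconnected⟩ hT⟩
  have hmem : ∀ s, γ s ∈ Ω ↔ s ∈ Icc a b := fun s => by rw [← hT']; rfl
  have hsub : ∀ s, γ s ∈ interior Ω → s ∈ Ioo a b := by
    intro s hs
    have : s ∈ interior (Icc a b) := by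
      rw [← hT']
      exact preimage_interior_subset_interior_preimage hcont hs
    rwa [interior_Icc] at this
  have hs₀' := hsub s₀ hs₀
  have hab : a < b := hs₀'.1.trans hs₀'.2
  have hseg : ∀ x y, γ '' openSegment ℝ x y = openSegment ℝ (γ x) (γ y) := by
    intro x y
    have := image_openSegment ℝ (AffineMap.lineMap q (q + h) : ℝ →ᵃ[ℝ] ℝ × ℝ) x y
    rw [hγline, hγline, ← this]
    congr 1; funext s; exact hγline s
  refine ⟨a, b, hab, hmem, fun s => ⟨hsub s, fun hs => ?_⟩⟩
  rcases lt_trichotomy s s₀ with h1 | rfl | h1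
  · apply hΩconv.openSegment_self_interior_subset_interior
      ((hmem a).2 (left_mem_Icc.2 hab.le)) hs₀
    rw [← hseg, openSegment_eq_Ioo hs₀'.1]
    exact ⟨s, ⟨hs.1, h1⟩, rfl⟩
  · exact hs₀
  · apply hΩconv.openSegment_interior_self_subset_interior hs₀
      ((hmem b).2 (right_mem_Icc.2 hab.le))
    rw [← hseg, openSegment_eq_Ioo hs₀'.2]
    exact ⟨s, ⟨h1, hs.2⟩, rfl⟩

theorem continuous_normalForm (h : ℝ × ℝ) : Continuous (normalForm h) := by
  unfold normalForm; fun_prop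

theorem normalForm_add (h z w : ℝ × ℝ) : normalForm h (z + w) = normalForm h z + normalForm h w := by
  simp [normalForm]; ring

theorem normalForm_sub (h z w : ℝ × ℝ) : normalForm h (z - w) = normalForm h z - normalForm h w := by
  simp [normalForm]; ring

theorem normalForm_smul (h : ℝ × ℝ) (a : ℝ) (z : ℝ × ℝ) :
    normalForm h (a • z) = a * normalForm h z := by
  simp [normalForm]; ring

theorem normalForm_frameMap {h : ℝ × ℝ} (hh : h.1 ^ 2 + h.2 ^ 2 = 1) (s t : ℝ) :
    normalForm h (frameMap h (s, t)) = t := by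
  rw [frameMap_apply, normalForm]
  linear_combination t * hh

theorem frameMap_normalForm {h : ℝ × ℝ} (hh : h.1 ^ 2 + h.2 ^ 2 = 1) (z : ℝ × ℝ) :
    frameMap h (h.1 * z.1 + h.2 * z.2, normalForm h z) = z := by
  rw [frameMap_apply, normalForm]
  ext
  · simp only; linear_combination z.1 * hh
  · simp only; linear_combination z.2 * hh

theorem exists_normalForm_eq_sSup {Ω : Set (ℝ × ℝ)} (hΩc : IsCompact Ω) (hne : Ω.Nonempty)
    (h : ℝ × ℝ) : ∃ z ∈ Ω, normalForm h z = sSup (normalForm h '' Ω) :=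
  (hΩc.image (continuous_normalForm h)).sSup_mem (hne.image _)

theorem exists_normalForm_eq_sInf {Ω : Set (ℝ × ℝ)} (hΩc : IsCompact Ω) (hne : Ω.Nonempty)
    (h : ℝ × ℝ) : ∃ z ∈ Ω, normalForm h z = sInf (normalForm h '' Ω) :=
  (hΩc.image (continuous_normalForm h)).sInf_mem (hne.image _)

theorem normalForm_mem_Icc {Ω : Set (ℝ × ℝ)} (hΩc : IsCompact Ω) (h : ℝ × ℝ) {z : ℝ × ℝ}
    (hz : z ∈ Ω) : normalForm h z ∈ Icc (sInf (normalForm h '' Ω)) (sSup (normalForm h '' Ω)) :=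
  ⟨csInf_le (hΩc.image (continuous_normalForm h)).bddBelow (mem_image_of_mem _ hz),
    le_csSup (hΩc.image (continuous_normalForm h)).bddAbove (mem_image_of_mem _ hz)⟩

theorem widthPar_eq (Ω : Set (ℝ × ℝ)) (h : ℝ × ℝ) :
    widthPar Ω h = sSup (normalForm h '' Ω) - sInf (normalForm h '' Ω) := rfl

theorem normalForm_image_interior {Ω : Set (ℝ × ℝ)} (hΩc : IsCompact Ω) (hΩconv : Convex ℝ Ω)
    (hΩint : (interior Ω).Nonempty) {h : ℝ × ℝ} (hh : h.1 ^ 2 + h.2 ^ 2 = 1) :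
    normalForm h '' interior Ω = Ioo (sInf (normalForm h '' Ω)) (sSup (normalForm h '' Ω)) := by
  obtain ⟨z₀, hz₀⟩ := hΩint
  have hne : Ω.Nonempty := ⟨z₀, interior_subset hz₀⟩
  obtain ⟨C, hC, hC'⟩ := exists_normalForm_eq_sInf hΩc hne h
  obtain ⟨D, hD, hD'⟩ := exists_normalForm_eq_sSup hΩc hne h
  have hsub : ∀ z ∈ interior Ω,
      normalForm h z ∈ Ioo (sInf (normalForm h '' Ω)) (sSup (normalForm h '' Ω)) := by
    intro z hz
    have hc : Continuous fun e : ℝ => z + e • ((-h.2, h.1) : ℝ × ℝ) := by fun_prop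
    have hnhds : (fun e : ℝ => z + e • ((-h.2, h.1) : ℝ × ℝ)) ⁻¹' interior Ω ∈ nhds (0 : ℝ) :=
      (isOpen_interior.preimage hc).mem_nhds (by
        rwa [mem_preimage, zero_smul, add_zero])
    obtain ⟨r, hr, hball⟩ := Metric.mem_nhds_iff.1 hnhds
    have key : ∀ e : ℝ, |e| < r → normalForm h z + e ∈
        Icc (sInf (normalForm h '' Ω)) (sSup (normalForm h '' Ω)) := by
      intro e he
      have h1 : z + e • ((-h.2, h.1) : ℝ × ℝ) ∈ Ω :=
        interior_subset (hball (by simpa [Real.dist_eq] using he))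
      have h2 := normalForm_mem_Icc hΩc h h1
      have h3 : normalForm h (z + e • ((-h.2, h.1) : ℝ × ℝ)) = normalForm h z + e := by
        simp only [normalForm, Prod.fst_add, Prod.snd_add, Prod.smul_fst, Prod.smul_snd,
          smul_eq_mul]
        linear_combination e * hh
      rwa [h3] at h2
    have h1 := key (r / 2) (by rw [abs_of_pos (by positivity)]; linarith)
    have h2 := key (-(r / 2)) (by rw [abs_neg, abs_of_pos (by positivity)]; linarith)
    exact ⟨by linarith [h2.1], by linarith [h1.2]⟩
  have hz₀' := hsub z₀ hz₀
  have hseg : ∀ z w : ℝ × ℝ, openSegment ℝ z w ⊆ interior Ω → ∀ t,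
      t ∈ openSegment ℝ (normalForm h z) (normalForm h w) → t ∈ normalForm h '' interior Ω := by
    rintro z w hzw t ⟨a, b, ha, hb, hab, rfl⟩
    refine ⟨a • z + b • w, hzw ⟨a, b, ha, hb, hab, rfl⟩, ?_⟩
    simp [normalForm_add, normalForm_smul]
  refine Subset.antisymm (image_subset_iff.2 hsub) fun t ht => ?_
  rcases lt_trichotomy t (normalForm h z₀) with h1 | h1 | h1
  · refine hseg _ _ (hΩconv.openSegment_self_interior_subset_interior hC hz₀) t ?_
    rw [openSegment_eq_Ioo (hC' ▸ hz₀'.1), hC']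
    exact ⟨ht.1, h1⟩
  · exact ⟨z₀, hz₀, h1.symm⟩
  · refine hseg _ _ (hΩconv.openSegment_interior_self_subset_interior hz₀ hD) t ?_
    rw [openSegment_eq_Ioo (hD' ▸ hz₀'.2), hD']
    exact ⟨h1, ht.2⟩

/-- Fubini along chords parallel to `h`: the `L¹` norm of the directional derivative is twice the
integral of the chordwise maxima. -/
theorem exists_chordMax {Ω : Set (ℝ × ℝ)} (hΩc : IsCompact Ω) (hΩconv : Convex ℝ Ω)
    (hΩint : (interior Ω).Nonempty) {u : ℝ × ℝ → ℝ} (hcont : ContinuousOn u Ω)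
    (hconc : ConcaveOn ℝ Ω u) (hzero : ∀ z ∈ frontier Ω, u z = 0)
    {h : ℝ × ℝ} (hh : h.1 ^ 2 + h.2 ^ 2 = 1) :
    ∃ M : ℝ → ℝ, (∀ t ∈ Ioo (sInf (normalForm h '' Ω)) (sSup (normalForm h '' Ω)),
        IsGreatest (u '' {z ∈ Ω | normalForm h z = t}) (M t)) ∧
      ∫⁻ z in Ω, ‖fderiv ℝ u z h‖ₑ =
        ∫⁻ t in Ioo (sInf (normalForm h '' Ω)) (sSup (normalForm h '' Ω)),
          ENNReal.ofReal (2 * M t) := by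
  have himg := normalForm_image_interior hΩc hΩconv hΩint hh
  set I := Ioo (sInf (normalForm h '' Ω)) (sSup (normalForm h '' Ω)) with hI
  have hne0 : h ≠ 0 := by rintro rfl; simp at hh
  have hM : ∀ t, ∃ m, t ∈ I → IsGreatest (u '' {z ∈ Ω | normalForm h z = t}) m := by
    intro t
    by_cases ht : t ∈ I
    · obtain ⟨z, hz, hzt⟩ := himg ▸ ht
      have hcpt : IsCompact {z ∈ Ω | normalForm h z = t} :=
        hΩc.inter_right (isClosed_eq (continuous_normalForm h) continuous_const)
      obtain ⟨m, hm⟩ := (hcpt.image_of_continuousOn (hcont.mono inter_subset_left)).exists_isGreatest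
        (Nonempty.image u ⟨z, interior_subset hz, hzt⟩)
      exact ⟨m, fun _ => hm⟩
    · exact ⟨0, fun h => absurd h ht⟩
  choose M hM using hM
  refine ⟨M, hM, ?_⟩
  have hR := measurePreserving_frameMap hh
  have hmeas : Measurable fun z => ‖fderiv ℝ u z h‖ₑ :=
    (measurable_fderiv_apply_const ℝ u h).enorm
  have hae := hR.quasiMeasurePreserving.ae hconc.ae_differentiableAt_of_mem_interior
  have hae' : ∀ᵐ t : ℝ, ∀ᵐ s : ℝ, frameMap h (s, t) ∈ interior Ω →
      DifferentiableAt ℝ u (frameMap h (s, t)) := by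
    have hsw : ∀ᵐ w : ℝ × ℝ, frameMap h w.swap ∈ interior Ω →
        DifferentiableAt ℝ u (frameMap h w.swap) :=
      (Measure.measurePreserving_swap (μ := (volume : Measure ℝ))
        (ν := (volume : Measure ℝ))).quasiMeasurePreserving.ae hae
    exact Measure.ae_ae_of_ae_prod hsw
  rw [← setLIntegral_congr (interior_ae_eq_of_null_frontier (hΩconv.addHaar_frontier volume)),
    ← lintegral_indicator isOpen_interior.measurableSet,
    ← hR.lintegral_comp (hmeas.indicator isOpen_interior.measurableSet),
    Measure.volume_eq_prod, lintegral_prod_symm'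
      (fun w => (interior Ω).indicator (fun z => ‖fderiv ℝ u z h‖ₑ) (frameMap h w))
      ((hmeas.indicator isOpen_interior.measurableSet).comp hR.measurable),
    ← lintegral_indicator measurableSet_Ioo]
  refine lintegral_congr_ae ?_
  filter_upwards [hae'] with t ht
  by_cases htI : t ∈ I
  · rw [indicator_of_mem htI]
    obtain ⟨z, hz, hzt⟩ := himg ▸ htI
    set q : ℝ × ℝ := t • (-h.2, h.1) with hq
    have hRq : ∀ s, frameMap h (s, t) = q + s • h := fun s => frameMap_mk h s t
    have hz' : q + (h.1 * z.1 + h.2 * z.2) • h ∈ interior Ω := by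
      rwa [← hRq, ← hzt, frameMap_normalForm hh]
    obtain ⟨a, b, hab, hΩab, hIab⟩ := exists_chord hΩc hΩconv hne0 hz'
    have hend : ∀ s ∈ Icc a b, s ∉ Ioo a b → u (q + s • h) = 0 := fun s hs hs' =>
      hzero _ (by
        rw [hΩc.isClosed.frontier_eq]
        exact ⟨(hΩab s).2 hs, fun hc => hs' ((hIab s).1 hc)⟩)
    obtain ⟨⟨zm, ⟨hzmΩ, hzmt⟩, hzmM⟩, hub⟩ := hM t htI
    set p := h.1 * zm.1 + h.2 * zm.2 with hp
    have hzmp : q + p • h = zm := by rw [← hRq, ← hzmt, frameMap_normalForm hh]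
    have hpI : p ∈ Icc a b := (hΩab p).1 (by rwa [hzmp])
    have hmax : IsMaxOn (fun s => u (q + s • h)) (Icc a b) p := by
      intro s hs
      change u (q + s • h) ≤ u (q + p • h)
      rw [hzmp, hzmM]
      exact hub ⟨_, ⟨(hΩab s).2 hs, by rw [← hRq, normalForm_frameMap hh]⟩, rfl⟩
    have hγ : MapsTo (fun s : ℝ => q + s • h) (Icc a b) Ω := fun s hs => (hΩab s).2 hs
    have hconc' : ConcaveOn ℝ (Icc a b) (fun s => u (q + s • h)) := by
      refine ⟨convex_Icc a b, fun x hx y hy α β hα hβ hαβ => ?_⟩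
      have := hconc.2 (hγ hx) (hγ hy) hα hβ hαβ
      refine this.trans_eq (congrArg u ?_)
      simp only [smul_add, smul_smul, smul_eq_mul, add_smul]
      rw [show α • q + (α * x) • h + (β • q + (β * y) • h)
        = (α + β) • q + ((α * x) • h + (β * y) • h) by module, hαβ, one_smul]
    have h1D := hconc'.lintegral_enorm_deriv (g := fun s => fderiv ℝ u (q + s • h) h)
      (hcont.comp (by fun_prop) hγ) (hend a (left_mem_Icc.2 hab.le) (by simp))
      (hend b (right_mem_Icc.2 hab.le) (by simp))
      (by
        filter_upwards [ht] with s hs hsI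
        rw [hRq] at hs
        have hd := (hs ((hIab s).2 hsI)).hasFDerivAt
        have hγd : HasDerivAt (fun s : ℝ => q + s • h) h s := by
          simpa using ((hasDerivAt_id s).smul_const h).const_add q
        exact hd.comp_hasDerivAt s hγd) hpI hmax
    rw [hzmp, hzmM] at h1D
    rw [← h1D, ← lintegral_indicator measurableSet_Ioo]
    refine lintegral_congr fun s => ?_
    rw [hRq]
    by_cases hs : s ∈ Ioo a b
    · rw [indicator_of_mem hs, indicator_of_mem ((hIab s).2 hs)]
    · rw [indicator_of_notMem hs, indicator_of_notMem (fun hc => hs ((hIab s).1 hc))]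
  · rw [indicator_of_notMem htI]
    have : ∀ s, frameMap h (s, t) ∉ interior Ω := fun s hs =>
      htI (himg ▸ ⟨_, hs, normalForm_frameMap hh s t⟩)
    simp [indicator_of_notMem (this _)]

/-- The affine function on `[a, b]` with endpoint values `α` and `β`. -/
noncomputable def interp (a b α β t : ℝ) : ℝ := (α * (b - t) + β * (t - a)) / (b - a)

theorem setLIntegral_interp {a b α β : ℝ} (hab : a ≤ b) (hα : 0 ≤ α) (hβ : 0 ≤ β) :
    ∫⁻ t in Ioo a b, ENNReal.ofReal (2 * interp a b α β t) =
      ENNReal.ofReal ((α + β) * (b - a)) := by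
  rcases hab.eq_or_lt with rfl | hlt
  · simp
  have hne : b - a ≠ 0 := (sub_pos.2 hlt).ne'
  have hcont : Continuous fun t => 2 * interp a b α β t := by unfold interp; fun_prop
  have hder : ∀ t : ℝ, HasDerivAt (fun t => (-α * (b - t) ^ 2 + β * (t - a) ^ 2) / (b - a))
      (2 * interp a b α β t) t := by
    intro t
    have h1 : HasDerivAt (fun t : ℝ => (b - t) ^ 2) (2 * (b - t) * (-1)) t := by
      exact (((hasDerivAt_id' t).const_sub b).fun_pow 2).congr_deriv (by simp)
    have h2 : HasDerivAt (fun t : ℝ => (t - a) ^ 2) (2 * (t - a)) t := by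
      exact (((hasDerivAt_id' t).sub_const a).fun_pow 2).congr_deriv (by simp)
    refine (((h1.const_mul (-α)).add (h2.const_mul β)).div_const (b - a)).congr_deriv ?_
    rw [interp]; ring
  have hinteg := hcont.intervalIntegrable (μ := volume) a b
  have hval := intervalIntegral.integral_eq_sub_of_hasDerivAt (fun t _ => hder t) hinteg
  rw [intervalIntegral.integral_of_le hab, integral_Ioc_eq_integral_Ioo] at hval
  have hnn : ∀ t ∈ Ioo a b, 0 ≤ 2 * interp a b α β t := by
    intro t ht
    have h1 := sub_pos.2 ht.1
    have h2 := sub_pos.2 ht.2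
    have h3 := sub_pos.2 hlt
    unfold interp; positivity
  rw [← ofReal_integral_eq_lintegral_ofReal
    (((intervalIntegrable_iff_integrableOn_Ioc_of_le hab).1 hinteg).mono_set Ioo_subset_Ioc_self)
    ((ae_restrict_iff' measurableSet_Ioo).2 (.of_forall hnn)), hval]
  congr 1; field_simp; ring

theorem exists_le_of_interp {Ω : Set (ℝ × ℝ)} {u : ℝ × ℝ → ℝ} (hconc : ConcaveOn ℝ Ω u)
    (h : ℝ × ℝ) {A B : ℝ × ℝ} (hA : A ∈ Ω) (hB : B ∈ Ω) {α β t : ℝ} (hα : α ≤ u A) (hβ : β ≤ u B)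
    (ht : t ∈ Ioo (normalForm h A) (normalForm h B)) :
    ∃ z ∈ Ω, normalForm h z = t ∧ interp (normalForm h A) (normalForm h B) α β t ≤ u z := by
  set a := normalForm h A with ha
  set b := normalForm h B with hb
  have h1 := sub_pos.2 ht.1
  have h2 := sub_pos.2 ht.2
  have h3 : 0 < b - a := by linarith
  have hsum : (b - t) / (b - a) + (t - a) / (b - a) = 1 := by field_simp; ring
  have hl : 0 ≤ (b - t) / (b - a) := by positivity
  have hr : 0 ≤ (t - a) / (b - a) := by positivity
  refine ⟨_, hconc.1 hA hB hl hr hsum, ?_, ?_⟩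
  · rw [normalForm_add, normalForm_smul, normalForm_smul, ← ha, ← hb]
    field_simp; ring
  · refine le_trans ?_ (hconc.2 hA hB hl hr hsum)
    have e : interp a b α β t = (b - t) / (b - a) * α + (t - a) / (b - a) * β := by
      unfold interp; ring
    rw [e, smul_eq_mul, smul_eq_mul]
    gcongr

theorem ConcaveOn.nonneg_of_frontier {Ω : Set (ℝ × ℝ)} (hΩc : IsCompact Ω) {u : ℝ × ℝ → ℝ}
    (hconc : ConcaveOn ℝ Ω u) (hzero : ∀ z ∈ frontier Ω, u z = 0) : ∀ z ∈ Ω, 0 ≤ u z := by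
  intro z hz
  by_cases hzi : z ∈ interior Ω
  · obtain ⟨a, b, hab, hΩab, hIab⟩ := exists_chord (q := z) (h := (1, 0)) (s₀ := 0) hΩc hconc.1
      (by simp) (by rwa [zero_smul, add_zero])
    have hend : ∀ s ∈ Icc a b, s ∉ Ioo a b → u (z + s • ((1, 0) : ℝ × ℝ)) = 0 := fun s hs hs' =>
      hzero _ (by
        rw [hΩc.isClosed.frontier_eq]
        exact ⟨(hΩab s).2 hs, fun hc => hs' ((hIab s).1 hc)⟩)
    have h0 : (0 : ℝ) ∈ Ioo a b := (hIab 0).1 (by rwa [zero_smul, add_zero])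
    have ha := left_mem_Icc.2 hab.le
    have hb := right_mem_Icc.2 hab.le
    have hlt : 0 < b - a := sub_pos.2 hab
    have hsum : b / (b - a) + (-a) / (b - a) = 1 := by field_simp; ring
    have key := hconc.2 ((hΩab a).2 ha) ((hΩab b).2 hb) (div_nonneg h0.2.le hlt.le)
      (div_nonneg (neg_nonneg.2 h0.1.le) hlt.le) hsum
    rw [hend a ha (by simp), hend b hb (by simp)] at key
    have hz' : (b / (b - a)) • (z + a • ((1, 0) : ℝ × ℝ)) +
        (-a / (b - a)) • (z + b • ((1, 0) : ℝ × ℝ)) = z := by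
      rw [show (b / (b - a)) • (z + a • ((1, 0) : ℝ × ℝ)) +
        (-a / (b - a)) • (z + b • ((1, 0) : ℝ × ℝ)) = (b / (b - a) + (-a) / (b - a)) • z +
        (b / (b - a) * a + -a / (b - a) * b) • ((1, 0) : ℝ × ℝ) by module, hsum,
        show b / (b - a) * a + -a / (b - a) * b = 0 by ring, zero_smul, one_smul, add_zero]
    rw [hz'] at key
    simpa using key
  · exact (hzero z (by rw [hΩc.isClosed.frontier_eq]; exact ⟨hz, hzi⟩)).ge

theorem L1N_uh_eq (Ω : Set (ℝ × ℝ)) (u : ℝ × ℝ → ℝ) (h : ℝ × ℝ) :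
    L1N Ω (uh h u) = (∫⁻ z in Ω, ‖fderiv ℝ u z h‖ₑ).toReal :=
  integral_norm_eq_lintegral_enorm
    (measurable_fderiv_apply_const ℝ u h).aestronglyMeasurable

section Estimates

variable {Ω : Set (ℝ × ℝ)} {u : ℝ × ℝ → ℝ} {h : ℝ × ℝ}

theorem lintegral_le_of_superlevel (hΩc : IsCompact Ω) (hΩconv : Convex ℝ Ω)
    (hΩint : (interior Ω).Nonempty) (hu : MemU Ω u) (hh : h.1 ^ 2 + h.2 ^ 2 = 1) {k m : ℝ}
    (hk : 0 ≤ k) (hkm : k ≤ m) (hm : ∀ z ∈ Ω, u z ≤ m) (hne : ∃ z ∈ Ω, k ≤ u z) :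
    ∃ P ∈ Ω, ∃ Q ∈ Ω, k ≤ u P ∧ k ≤ u Q ∧ normalForm h P ≤ normalForm h Q ∧
      ∫⁻ z in Ω, ‖fderiv ℝ u z h‖ₑ ≤ ENNReal.ofReal
        (2 * (k * widthPar Ω h + (m - k) * (normalForm h Q - normalForm h P))) := by
  obtain ⟨hcont, hconc, hzero, -⟩ := hu
  obtain ⟨M, hM, hinteg⟩ := exists_chordMax hΩc hΩconv hΩint hcont hconc hzero hh
  set K := {z ∈ Ω | k ≤ u z} with hK
  have hKc : IsCompact K :=
    hΩc.of_isClosed_subset (hcont.preimage_isClosed_of_isClosed hΩc.isClosed isClosed_Ici)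
      inter_subset_left
  have hKne : K.Nonempty := hne
  obtain ⟨P, hP, hPm⟩ := exists_normalForm_eq_sInf hKc hKne h
  obtain ⟨Q, hQ, hQm⟩ := exists_normalForm_eq_sSup hKc hKne h
  have hPQ : normalForm h P ≤ normalForm h Q := hQm ▸ (normalForm_mem_Icc hKc h hP).2
  have hw : 0 ≤ widthPar Ω h := by
    have := normalForm_mem_Icc hΩc h hP.1
    rw [widthPar_eq]; linarith [this.1, this.2]
  refine ⟨P, hP.1, Q, hQ.1, hP.2, hQ.2, hPQ, ?_⟩
  rw [hinteg]
  calc ∫⁻ t in Ioo (sInf (normalForm h '' Ω)) (sSup (normalForm h '' Ω)), ENNReal.ofReal (2 * M t)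
      ≤ ∫⁻ t in Ioo (sInf (normalForm h '' Ω)) (sSup (normalForm h '' Ω)),
          (ENNReal.ofReal (2 * k) + (Icc (normalForm h P) (normalForm h Q)).indicator
            (fun _ => ENNReal.ofReal (2 * (m - k))) t) := by
        refine setLIntegral_mono' measurableSet_Ioo fun t ht => ?_
        obtain ⟨⟨z, ⟨hz, hzt⟩, hzM⟩, -⟩ := hM t ht
        by_cases htI : t ∈ Icc (normalForm h P) (normalForm h Q)
        · rw [indicator_of_mem htI, ← ENNReal.ofReal_add (by linarith) (by linarith), ← hzM]
          exact ENNReal.ofReal_le_ofReal (by linarith [hm z hz])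
        · rw [indicator_of_notMem htI, add_zero, ← hzM]
          refine ENNReal.ofReal_le_ofReal ?_
          by_contra hcon
          have hzK : z ∈ K := ⟨hz, by linarith⟩
          exact htI (by rw [hPm, hQm, ← hzt]; exact normalForm_mem_Icc hKc h hzK)
    _ ≤ ENNReal.ofReal (2 * k) * ENNReal.ofReal (widthPar Ω h) +
          ENNReal.ofReal (2 * (m - k)) * ENNReal.ofReal (normalForm h Q - normalForm h P) := by
        rw [lintegral_add_left measurable_const, setLIntegral_const, Real.volume_Ioo]
        refine add_le_add le_rfl ((setLIntegral_le_lintegral _ _).trans ?_)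
        rw [lintegral_indicator_const measurableSet_Icc, Real.volume_Icc]
    _ = _ := by
        have h1 : 0 ≤ 2 * (m - k) := by linarith
        rw [← ENNReal.ofReal_mul (by linarith), ← ENNReal.ofReal_mul h1,
          ← ENNReal.ofReal_add (by positivity) (mul_nonneg h1 (by linarith))]
        congr 1; ring

theorem MemU.exists_isMaxOn (hΩc : IsCompact Ω) (hΩint : (interior Ω).Nonempty) (hu : MemU Ω u) :
    ∃ z ∈ Ω, ∀ w ∈ Ω, u w ≤ u z :=
  hΩc.exists_isMaxOn (hΩint.mono interior_subset) hu.1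

theorem lintegral_ne_top (hΩc : IsCompact Ω) (hΩconv : Convex ℝ Ω)
    (hΩint : (interior Ω).Nonempty) (hu : MemU Ω u) (hh : h.1 ^ 2 + h.2 ^ 2 = 1) :
    ∫⁻ z in Ω, ‖fderiv ℝ u z h‖ₑ ≠ ∞ := by
  obtain ⟨z, hz, hmax⟩ := hu.exists_isMaxOn hΩc hΩint
  obtain ⟨_, _, _, _, _, _, _, hle⟩ := lintegral_le_of_superlevel hΩc hΩconv hΩint hu hh
    (hu.2.1.nonneg_of_frontier hΩc hu.2.2.1 z hz) le_rfl hmax ⟨z, hz, le_rfl⟩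
  exact (hle.trans_lt ENNReal.ofReal_lt_top).ne

theorem L1N_le_of_superlevel (hΩc : IsCompact Ω) (hΩconv : Convex ℝ Ω)
    (hΩint : (interior Ω).Nonempty) (hu : MemU Ω u) (hh : h.1 ^ 2 + h.2 ^ 2 = 1) {k m : ℝ}
    (hk : 0 ≤ k) (hkm : k ≤ m) (hm : ∀ z ∈ Ω, u z ≤ m) (hne : ∃ z ∈ Ω, k ≤ u z) :
    ∃ P ∈ Ω, ∃ Q ∈ Ω, k ≤ u P ∧ k ≤ u Q ∧ normalForm h P ≤ normalForm h Q ∧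
      L1N Ω (uh h u) ≤
        2 * (k * widthPar Ω h + (m - k) * (normalForm h Q - normalForm h P)) := by
  obtain ⟨P, hP, Q, hQ, hkP, hkQ, hPQ, hle⟩ :=
    lintegral_le_of_superlevel hΩc hΩconv hΩint hu hh hk hkm hm hne
  refine ⟨P, hP, Q, hQ, hkP, hkQ, hPQ, ?_⟩
  rw [L1N_uh_eq]
  refine ENNReal.toReal_le_of_le_ofReal ?_ hle
  have := normalForm_mem_Icc hΩc h hP
  have hw : 0 ≤ widthPar Ω h := by rw [widthPar_eq]; linarith [this.1, this.2]
  have h1 := mul_nonneg hk hw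
  have h2 := mul_nonneg (sub_nonneg.2 hkm) (sub_nonneg.2 hPQ)
  linarith

theorem L1N_ge_of_superlevel (hΩc : IsCompact Ω) (hΩconv : Convex ℝ Ω)
    (hΩint : (interior Ω).Nonempty) (hu : MemU Ω u) (hh : h.1 ^ 2 + h.2 ^ 2 = 1) {k : ℝ}
    (hk : 0 ≤ k) {P Q : ℝ × ℝ} (hP : P ∈ Ω) (hQ : Q ∈ Ω) (hkP : k ≤ u P) (hkQ : k ≤ u Q)
    (hPQ : normalForm h P ≤ normalForm h Q) :
    k * (widthPar Ω h + (normalForm h Q - normalForm h P)) ≤ L1N Ω (uh h u) := by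
  have hnn := hu.2.1.nonneg_of_frontier hΩc hu.2.2.1
  have htop := lintegral_ne_top hΩc hΩconv hΩint hu hh
  obtain ⟨hcont, hconc, hzero, -⟩ := hu
  obtain ⟨M, hM, hinteg⟩ := exists_chordMax hΩc hΩconv hΩint hcont hconc hzero hh
  obtain ⟨C, hC, hC'⟩ := exists_normalForm_eq_sInf hΩc ⟨P, hP⟩ h
  obtain ⟨D, hD, hD'⟩ := exists_normalForm_eq_sSup hΩc ⟨P, hP⟩ h
  have hCP : normalForm h C ≤ normalForm h P := hC' ▸ (normalForm_mem_Icc hΩc h hP).1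
  have hQD : normalForm h Q ≤ normalForm h D := hD' ▸ (normalForm_mem_Icc hΩc h hQ).2
  rw [← hC', ← hD'] at hM hinteg
  have hpiece : ∀ A ∈ Ω, ∀ B ∈ Ω, ∀ α β : ℝ, 0 ≤ α → 0 ≤ β → α ≤ u A → β ≤ u B →
      normalForm h A ≤ normalForm h B →
      ENNReal.ofReal ((α + β) * (normalForm h B - normalForm h A)) ≤
        ∫⁻ t in Ioo (normalForm h A) (normalForm h B), ENNReal.ofReal (2 * M t) := by
    intro A hA B hB α β hα hβ hαA hβB hAB
    rw [← setLIntegral_interp hAB hα hβ]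
    refine setLIntegral_mono' measurableSet_Ioo fun t ht => ?_
    obtain ⟨z, hz, hzt, hle⟩ := exists_le_of_interp hconc h hA hB hαA hβB ht
    have hCA := (normalForm_mem_Icc hΩc h hA).1
    have hBD := (normalForm_mem_Icc hΩc h hB).2
    rw [← hC'] at hCA
    rw [← hD'] at hBD
    have := (hM t ⟨hCA.trans_lt ht.1, ht.2.trans_le hBD⟩).2 ⟨z, ⟨hz, hzt⟩, rfl⟩
    exact ENNReal.ofReal_le_ofReal (by linarith)
  rw [L1N_uh_eq, ← ENNReal.ofReal_le_iff_le_toReal htop, hinteg,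
    setLIntegral_Ioo_add hCP (hPQ.trans hQD), setLIntegral_Ioo_add hPQ hQD]
  refine le_trans (le_of_eq ?_) (add_le_add (hpiece C hC P hP 0 k le_rfl hk (hnn C hC) hkP hCP)
    (add_le_add (hpiece P hP Q hQ k k hk hk hkP hkQ hPQ)
      (hpiece Q hQ D hD k 0 hk le_rfl hkQ (hnn D hD) hQD)))
  have e1 := sub_nonneg.2 hCP
  have e2 := sub_nonneg.2 hPQ
  have e3 := sub_nonneg.2 hQD
  rw [← ENNReal.ofReal_add (by positivity) (by positivity),
    ← ENNReal.ofReal_add (by positivity) (by positivity), widthPar_eq, ← hC', ← hD']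
  congr 1; ring

theorem L1N_le_of_le_interp (hΩc : IsCompact Ω) (hΩconv : Convex ℝ Ω)
    (hΩint : (interior Ω).Nonempty) (hu : MemU Ω u) (hh : h.1 ^ 2 + h.2 ^ 2 = 1) {x : ℝ}
    (hx : x ∈ Ioo (sInf (normalForm h '' Ω)) (sSup (normalForm h '' Ω)))
    (hl : ∀ z ∈ Ω, u z ≤ interp (sInf (normalForm h '' Ω)) x 0 1 (normalForm h z))
    (hr : ∀ z ∈ Ω, u z ≤ interp x (sSup (normalForm h '' Ω)) 1 0 (normalForm h z)) :
    L1N Ω (uh h u) ≤ widthPar Ω h := by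
  obtain ⟨hcont, hconc, hzero, -⟩ := hu
  obtain ⟨M, hM, hinteg⟩ := exists_chordMax hΩc hΩconv hΩint hcont hconc hzero hh
  rw [L1N_uh_eq, hinteg, setLIntegral_Ioo_add hx.1.le hx.2.le, widthPar_eq]
  refine ENNReal.toReal_le_of_le_ofReal (by linarith [hx.1, hx.2]) ?_
  have h1 := setLIntegral_interp hx.1.le le_rfl zero_le_one
  have h2 := setLIntegral_interp hx.2.le zero_le_one le_rfl
  have e : sSup (normalForm h '' Ω) - sInf (normalForm h '' Ω) =
    (0 + 1) * (x - sInf (normalForm h '' Ω)) + (1 + 0) * (sSup (normalForm h '' Ω) - x) := by ring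
  rw [e, ENNReal.ofReal_add (by linarith [hx.1]) (by linarith [hx.2]), ← h1, ← h2]
  refine add_le_add (setLIntegral_mono' measurableSet_Ioo fun t ht => ?_)
    (setLIntegral_mono' measurableSet_Ioo fun t ht => ?_)
  · obtain ⟨⟨z, ⟨hz, hzt⟩, hzM⟩, -⟩ := hM t ⟨ht.1, ht.2.trans hx.2⟩
    rw [← hzM, ← hzt]
    exact ENNReal.ofReal_le_ofReal (by linarith [hl z hz])
  · obtain ⟨⟨z, ⟨hz, hzt⟩, hzM⟩, -⟩ := hM t ⟨hx.1.trans ht.1, ht.2⟩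
    rw [← hzM, ← hzt]
    exact ENNReal.ofReal_le_ofReal (by linarith [hr z hz])

end Estimates

section Widths

variable {Ω : Set (ℝ × ℝ)} {h : ℝ × ℝ}

theorem continuous_widthPar (hΩc : IsCompact Ω) : Continuous (widthPar Ω) := by
  have hf : Continuous (Function.uncurry normalForm) := by
    unfold normalForm Function.uncurry; fun_prop
  exact (hΩc.continuous_sSup hf).sub (hΩc.continuous_sInf hf)

theorem widthPar_pos (hΩc : IsCompact Ω) (hΩconv : Convex ℝ Ω) (hΩint : (interior Ω).Nonempty)
    (hh : h.1 ^ 2 + h.2 ^ 2 = 1) : 0 < widthPar Ω h := by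
  have hne := hΩint.image (normalForm h)
  rw [normalForm_image_interior hΩc hΩconv hΩint hh, nonempty_Ioo] at hne
  rw [widthPar_eq]; linarith

theorem normalForm_sub_le_widthPar (hΩc : IsCompact Ω) (h : ℝ × ℝ) {P Q : ℝ × ℝ} (hP : P ∈ Ω)
    (hQ : Q ∈ Ω) : normalForm h (Q - P) ≤ widthPar Ω h := by
  rw [normalForm_sub, widthPar_eq]
  linarith [(normalForm_mem_Icc hΩc h hP).1, (normalForm_mem_Icc hΩc h hQ).2]

/-- The diameter of a compact set is at most its maximal width. -/
theorem sq_add_sq_le_of_widthPar_le (hΩc : IsCompact Ω) {W : ℝ}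
    (hW : ∀ h : ℝ × ℝ, h.1 ^ 2 + h.2 ^ 2 = 1 → widthPar Ω h ≤ W) {P Q : ℝ × ℝ} (hP : P ∈ Ω)
    (hQ : Q ∈ Ω) : (Q - P).1 ^ 2 + (Q - P).2 ^ 2 ≤ W ^ 2 := by
  set v := Q - P with hv
  by_cases h0 : v.1 ^ 2 + v.2 ^ 2 = 0
  · rw [h0]; positivity
  set n := √(v.1 ^ 2 + v.2 ^ 2) with hn
  have hn2 : n ^ 2 = v.1 ^ 2 + v.2 ^ 2 := Real.sq_sqrt (by positivity)
  have hn0 : 0 < n := Real.sqrt_pos.2 (lt_of_le_of_ne (by positivity) (Ne.symm h0))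
  have hle := (normalForm_sub_le_widthPar hΩc (v.2 / n, -v.1 / n) hP hQ).trans
    (hW _ (by simp only; field_simp; linarith))
  have hval : normalForm (v.2 / n, -v.1 / n) v = n := by
    simp only [normalForm]; field_simp; linarith
  rw [← hv, hval] at hle
  rw [← hn2]; gcongr

theorem eq_smul_normal {W : ℝ} {v : ℝ × ℝ} (hh : h.1 ^ 2 + h.2 ^ 2 = 1)
    (hv : v.1 ^ 2 + v.2 ^ 2 ≤ W ^ 2) (hn : W ≤ normalForm h v) (hW : 0 ≤ W) :
    v.1 = -W * h.2 ∧ v.2 = W * h.1 := by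
  unfold normalForm at hn
  have key : (v.1 + W * h.2) ^ 2 + (v.2 - W * h.1) ^ 2 ≤ 0 := by
    nlinarith [mul_le_mul_of_nonneg_left hn hW]
  have h1 : (v.1 + W * h.2) ^ 2 = 0 := by
    nlinarith [sq_nonneg (v.1 + W * h.2), sq_nonneg (v.2 - W * h.1)]
  have h2 : (v.2 - W * h.1) ^ 2 = 0 := by
    nlinarith [sq_nonneg (v.1 + W * h.2), sq_nonneg (v.2 - W * h.1)]
  have h1' := pow_eq_zero_iff (two_ne_zero) |>.1 h1
  have h2' := pow_eq_zero_iff (two_ne_zero) |>.1 h2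
  constructor <;> linarith

theorem isCompact_unitCircle : IsCompact {h : ℝ × ℝ | h.1 ^ 2 + h.2 ^ 2 = 1} := by
  refine (isCompact_Icc (a := ((-1, -1) : ℝ × ℝ)) (b := (1, 1))).of_isClosed_subset
    (isClosed_eq (by fun_prop) continuous_const) ?_
  rintro ⟨x, y⟩ (hxy : x ^ 2 + y ^ 2 = 1)
  exact ⟨⟨by simp only; nlinarith, by simp only; nlinarith⟩,
    ⟨by simp only; nlinarith, by simp only; nlinarith⟩⟩

end Widths

section Ratio

variable {Ω : Set (ℝ × ℝ)} {u : ℝ × ℝ → ℝ}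

theorem MemU.exists_pos_isMaxOn (hΩc : IsCompact Ω) (hΩint : (interior Ω).Nonempty)
    (hu : MemU Ω u) (hne : ∃ z ∈ Ω, u z ≠ 0) : ∃ z ∈ Ω, 0 < u z ∧ ∀ w ∈ Ω, u w ≤ u z := by
  obtain ⟨z, hz, hmax⟩ := hu.exists_isMaxOn hΩc hΩint
  obtain ⟨w, hw, hw0⟩ := hne
  exact ⟨z, hz, ((hu.2.1.nonneg_of_frontier hΩc hu.2.2.1 w hw).lt_of_ne' hw0).trans_le (hmax w hw),
    hmax⟩

theorem L1N_pos (hΩc : IsCompact Ω) (hΩconv : Convex ℝ Ω) (hΩint : (interior Ω).Nonempty)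
    (hu : MemU Ω u) (hne : ∃ z ∈ Ω, u z ≠ 0) {h : ℝ × ℝ} (hh : h.1 ^ 2 + h.2 ^ 2 = 1) :
    0 < L1N Ω (uh h u) := by
  obtain ⟨z, hz, hpos, -⟩ := hu.exists_pos_isMaxOn hΩc hΩint hne
  have hB := L1N_ge_of_superlevel hΩc hΩconv hΩint hu hh hpos.le hz hz le_rfl le_rfl le_rfl
  rw [sub_self, add_zero] at hB
  exact (mul_pos hpos (widthPar_pos hΩc hΩconv hΩint hh)).trans_le hB

theorem L1N_ratio_le (hΩc : IsCompact Ω) (hΩconv : Convex ℝ Ω) (hΩint : (interior Ω).Nonempty)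
    {W w : ℝ} (hW : ∀ h : ℝ × ℝ, h.1 ^ 2 + h.2 ^ 2 = 1 → widthPar Ω h ≤ W) (hw0 : 0 < w)
    (hw : ∀ h : ℝ × ℝ, h.1 ^ 2 + h.2 ^ 2 = 1 → w ≤ widthPar Ω h)
    (hu : MemU Ω u) (hne : ∃ z ∈ Ω, u z ≠ 0) {h₁ h₂ : ℝ × ℝ} (hh₁ : h₁.1 ^ 2 + h₁.2 ^ 2 = 1)
    (hh₂ : h₂.1 ^ 2 + h₂.2 ^ 2 = 1) :
    L1N Ω (uh h₁ u) / L1N Ω (uh h₂ u) ≤ 2 * (W / w) := by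
  have hBpos := L1N_pos hΩc hΩconv hΩint hu hne hh₂
  obtain ⟨z, hz, hpos, hmax⟩ := hu.exists_pos_isMaxOn hΩc hΩint hne
  have hB := L1N_ge_of_superlevel hΩc hΩconv hΩint hu hh₂ hpos.le hz hz le_rfl le_rfl le_rfl
  obtain ⟨_, _, _, _, _, _, _, hA⟩ :=
    L1N_le_of_superlevel hΩc hΩconv hΩint hu hh₁ hpos.le le_rfl hmax ⟨z, hz, le_rfl⟩
  rw [sub_self, zero_mul, add_zero] at hA
  rw [sub_self, add_zero] at hB
  have hW0 : 0 ≤ W := (widthPar_pos hΩc hΩconv hΩint hh₁).le.trans (hW _ hh₁)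
  rw [div_le_iff₀ hBpos]
  calc L1N Ω (uh h₁ u) ≤ 2 * (u z * widthPar Ω h₁) := hA
    _ ≤ 2 * (u z * W) := by gcongr; exact hW _ hh₁
    _ = 2 * (W / w) * (u z * w) := by field_simp
    _ ≤ 2 * (W / w) * L1N Ω (uh h₂ u) := by
      gcongr
      exact le_trans (by gcongr; exact hw _ hh₂) hB

/-- If the ratio of the norms is nearly extremal, then a high superlevel set contains two points
which are nearly at distance `W` across `h₁` but nearly level across `h₂`. -/
theorem exists_points_of_ratio_gt (hΩc : IsCompact Ω) (hΩconv : Convex ℝ Ω)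
    (hΩint : (interior Ω).Nonempty)
    {W w δ : ℝ} (hW : ∀ h : ℝ × ℝ, h.1 ^ 2 + h.2 ^ 2 = 1 → widthPar Ω h ≤ W) (hw0 : 0 < w)
    (hw : ∀ h : ℝ × ℝ, h.1 ^ 2 + h.2 ^ 2 = 1 → w ≤ widthPar Ω h) (hδ : δ ∈ Ioo (0 : ℝ) 1)
    (hu : MemU Ω u) (hne : ∃ z ∈ Ω, u z ≠ 0) {h₁ h₂ : ℝ × ℝ} (hh₁ : h₁.1 ^ 2 + h₁.2 ^ 2 = 1)
    (hh₂ : h₂.1 ^ 2 + h₂.2 ^ 2 = 1)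
    (hr : 2 * (W / w) * (1 - δ ^ 2) < L1N Ω (uh h₁ u) / L1N Ω (uh h₂ u)) :
    ∃ P ∈ Ω, ∃ Q ∈ Ω, W - normalForm h₁ (Q - P) ≤ δ * W ∧
      widthPar Ω h₂ + |normalForm h₂ (Q - P)| ≤ w / ((1 - δ ^ 2) * (1 - δ)) := by
  obtain ⟨hδ0, hδ1⟩ := hδ
  have hBpos := L1N_pos hΩc hΩconv hΩint hu hne hh₂
  obtain ⟨z, hz, hpos, hmax⟩ := hu.exists_pos_isMaxOn hΩc hΩint hne
  have hk : 0 ≤ (1 - δ) * u z := mul_nonneg (by linarith) hpos.le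
  have hkm : (1 - δ) * u z ≤ u z := by nlinarith
  obtain ⟨P, hP, Q, hQ, hkP, hkQ, hPQ, hA⟩ :=
    L1N_le_of_superlevel hΩc hΩconv hΩint hu hh₁ hk hkm hmax ⟨z, hz, hkm⟩
  have hB := L1N_ge_of_superlevel hΩc hΩconv hΩint hu hh₂ hpos.le hz hz le_rfl le_rfl le_rfl
  rw [sub_self, add_zero] at hB
  have hB' : (1 - δ) * u z * (widthPar Ω h₂ + |normalForm h₂ (Q - P)|) ≤ L1N Ω (uh h₂ u) := by
    rw [normalForm_sub]
    rcases le_total (normalForm h₂ P) (normalForm h₂ Q) with hle | hle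
    · rw [abs_of_nonneg (sub_nonneg.2 hle)]
      exact L1N_ge_of_superlevel hΩc hΩconv hΩint hu hh₂ hk hP hQ hkP hkQ hle
    · rw [abs_sub_comm, abs_of_nonneg (sub_nonneg.2 hle)]
      exact L1N_ge_of_superlevel hΩc hΩconv hΩint hu hh₂ hk hQ hP hkQ hkP hle
  rw [lt_div_iff₀ hBpos] at hr
  have hw₁ := hW _ hh₁
  have hw₂ := hw _ hh₂
  have hs₁ := (normalForm_sub_le_widthPar hΩc h₁ hP hQ).trans hw₁
  have hW0 : 0 < W := (widthPar_pos hΩc hΩconv hΩint hh₁).trans_le hw₁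
  rw [← normalForm_sub] at hA
  set s₁ := normalForm h₁ (Q - P)
  set m := u z
  set A := L1N Ω (uh h₁ u)
  set B := L1N Ω (uh h₂ u)
  have hδ2 : 0 < 1 - δ ^ 2 := by nlinarith
  have hd : 0 < 1 - δ := by linarith
  have hA1 : A ≤ 2 * m * ((1 - δ) * W + δ * s₁) := by
    have : (1 - δ) * m * widthPar Ω h₁ ≤ (1 - δ) * m * W := by gcongr
    linarith
  refine ⟨P, hP, Q, hQ, ?_, ?_⟩
  · have h1 : 2 * (W / w) * (1 - δ ^ 2) * (m * w) ≤ 2 * (W / w) * (1 - δ ^ 2) * B := by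
      gcongr
      exact le_trans (by gcongr) hB
    have h2 : 2 * (W / w) * (1 - δ ^ 2) * (m * w) = 2 * m * (W * (1 - δ ^ 2)) := by
      field_simp
    have h3 : W * (1 - δ ^ 2) < (1 - δ) * W + δ * s₁ :=
      lt_of_mul_lt_mul_left (by linarith) (by positivity : 0 ≤ 2 * m)
    have h4 : δ * (W - s₁) < δ * (δ * W) := by nlinarith
    exact (lt_of_mul_lt_mul_left h4 hδ0.le).le
  · have h1 : 2 * (W / w) * (1 - δ ^ 2) * ((1 - δ) * m * (widthPar Ω h₂ + |normalForm h₂ (Q - P)|))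
        ≤ 2 * (W / w) * (1 - δ ^ 2) * B := by gcongr
    have h2 : A ≤ 2 * m * W := by
      refine hA1.trans ?_
      have : δ * s₁ ≤ δ * W := by gcongr
      gcongr; linarith
    rw [le_div_iff₀ (by positivity)]
    have h3 : (2 * m * (W / w)) * ((widthPar Ω h₂ + |normalForm h₂ (Q - P)|) *
        ((1 - δ ^ 2) * (1 - δ))) ≤ (2 * m * (W / w)) * w := by
      have : (2 * m * (W / w)) * w = 2 * m * W := by field_simp
      rw [this]; linarith
    exact le_of_mul_le_mul_left h3 (by positivity)

theorem exists_orthogonal_of_ratio (hΩc : IsCompact Ω) (hΩconv : Convex ℝ Ω)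
    (hΩint : (interior Ω).Nonempty)
    {W w : ℝ} (hW : ∀ h : ℝ × ℝ, h.1 ^ 2 + h.2 ^ 2 = 1 → widthPar Ω h ≤ W) (hw0 : 0 < w)
    (hw : ∀ h : ℝ × ℝ, h.1 ^ 2 + h.2 ^ 2 = 1 → w ≤ widthPar Ω h)
    (hr : ∀ δ ∈ Ioo (0 : ℝ) 1, ∃ (u : ℝ × ℝ → ℝ) (h₁ h₂ : ℝ × ℝ), MemU Ω u ∧ (∃ z ∈ Ω, u z ≠ 0) ∧
      h₁.1 ^ 2 + h₁.2 ^ 2 = 1 ∧ h₂.1 ^ 2 + h₂.2 ^ 2 = 1 ∧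
      2 * (W / w) * (1 - δ ^ 2) < L1N Ω (uh h₁ u) / L1N Ω (uh h₂ u)) :
    ∃ h₁ h₂ : ℝ × ℝ, h₁.1 ^ 2 + h₁.2 ^ 2 = 1 ∧ h₂.1 ^ 2 + h₂.2 ^ 2 = 1 ∧
        widthPar Ω h₁ = W ∧ widthPar Ω h₂ = w ∧ h₁.1 * h₂.1 + h₁.2 * h₂.2 = 0 := by
  set S := {h : ℝ × ℝ | h.1 ^ 2 + h.2 ^ 2 = 1} with hS
  set F : (ℝ × ℝ) × (ℝ × ℝ) × (ℝ × ℝ) × (ℝ × ℝ) → ℝ := fun x =>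
    (W - normalForm x.2.2.1 (x.2.1 - x.1)) +
      (widthPar Ω x.2.2.2 + |normalForm x.2.2.2 (x.2.1 - x.1)| - w) with hF
  have hFc : Continuous F := by
    have h1 : Continuous fun x : (ℝ × ℝ) × (ℝ × ℝ) × (ℝ × ℝ) × (ℝ × ℝ) => widthPar Ω x.2.2.2 :=
      (continuous_widthPar hΩc).comp (by fun_prop)
    simp only [hF, normalForm]
    fun_prop
  have hcpt : IsCompact (Ω ×ˢ Ω ×ˢ S ×ˢ S) :=
    hΩc.prod (hΩc.prod (isCompact_unitCircle.prod isCompact_unitCircle))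
  have hΩne := hΩint.mono interior_subset
  have hSne : S.Nonempty := ⟨(1, 0), by simp [hS]⟩
  obtain ⟨⟨P, Q, h₁, h₂⟩, ⟨hP, hQ, hh₁, hh₂⟩, hmin⟩ := hcpt.exists_isMinOn
    (hΩne.prod (hΩne.prod (hSne.prod hSne))) hFc.continuousOn
  have hbound : ∀ δ ∈ Ioo (0 : ℝ) 1,
      F (P, Q, h₁, h₂) ≤ δ * W + (w / ((1 - δ ^ 2) * (1 - δ)) - w) := by
    intro δ hδ
    obtain ⟨u, k₁, k₂, hu, hne, hk₁, hk₂, hlt⟩ := hr δ hδ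
    obtain ⟨P', hP', Q', hQ', hl, hr⟩ :=
      exists_points_of_ratio_gt hΩc hΩconv hΩint hW hw0 hw hδ hu hne hk₁ hk₂ hlt
    have : F (P, Q, h₁, h₂) ≤ F (P', Q', k₁, k₂) := hmin ⟨hP', hQ', hk₁, hk₂⟩
    refine this.trans ?_
    simp only [hF]; linarith
  have hF0 : F (P, Q, h₁, h₂) ≤ 0 := by
    have hlim : Filter.Tendsto (fun δ : ℝ => δ * W + (w / ((1 - δ ^ 2) * (1 - δ)) - w))
        (nhdsWithin 0 (Ioi 0)) (nhds 0) := by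
      have : ContinuousAt (fun δ : ℝ => δ * W + (w / ((1 - δ ^ 2) * (1 - δ)) - w)) 0 := by
        fun_prop (disch := norm_num)
      have h2 := this.tendsto
      norm_num at h2
      exact h2.mono_left nhdsWithin_le_nhds
    refine ge_of_tendsto hlim ?_
    filter_upwards [Ioo_mem_nhdsGT (zero_lt_one' ℝ)] with δ hδ using hbound δ hδ
  simp only [hF] at hF0
  have hle₁ := normalForm_sub_le_widthPar hΩc h₁ hP hQ
  have hW₁ := hW _ hh₁
  have hw₂ := hw _ hh₂
  have habs := abs_nonneg (normalForm h₂ (Q - P))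
  have hzero : normalForm h₂ (Q - P) = 0 := abs_eq_zero.1 (by linarith)
  have hW0 : 0 < W := (widthPar_pos hΩc hΩconv hΩint hh₁).trans_le hW₁
  obtain ⟨e1, e2⟩ := eq_smul_normal hh₁ (sq_add_sq_le_of_widthPar_le hΩc hW hP hQ)
    (by linarith) hW0.le
  refine ⟨h₁, h₂, hh₁, hh₂, by linarith, by linarith, ?_⟩
  rw [normalForm, e1, e2] at hzero
  have : W * (h₁.1 * h₂.1 + h₁.2 * h₂.2) = 0 := by linear_combination hzero
  exact (mul_eq_zero.1 this).resolve_left hW0.ne'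

end Ratio

section Roof

variable {Ω : Set (ℝ × ℝ)}

theorem concaveOn_infDist_compl {E : Type*} [NormedAddCommGroup E] [NormedSpace ℝ E] {s : Set E}
    (hs : Convex ℝ s) : ConcaveOn ℝ s fun z => Metric.infDist z sᶜ := by
  refine ⟨hs, fun x hx y hy a b ha hb hab => ?_⟩
  rcases sᶜ.eq_empty_or_nonempty with he | hne
  · simp [he]
  refine (Metric.le_infDist hne).2 fun {z} hz => ?_
  by_contra! hlt
  set p := Metric.infDist x sᶜ
  set q := Metric.infDist y sᶜ
  have hp : 0 ≤ p := Metric.infDist_nonneg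
  have hq : 0 ≤ q := Metric.infDist_nonneg
  simp only [smul_eq_mul] at hlt
  set D := a * p + b * q with hD
  have hD0 : 0 < D := dist_nonneg.trans_lt hlt
  set v := z - (a • x + b • y) with hv
  have hvD : ‖v‖ < D := by rwa [hv, ← dist_eq_norm, dist_comm]
  have key : ∀ w ∈ s, w + (Metric.infDist w sᶜ / D) • v ∈ s := by
    intro w hw
    by_contra hc
    have h1 : Metric.infDist w sᶜ ≤ dist w (w + (Metric.infDist w sᶜ / D) • v) :=
      Metric.infDist_le_dist_of_mem hc
    rw [dist_self_add_right, norm_smul, Real.norm_of_nonneg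
      (div_nonneg Metric.infDist_nonneg hD0.le)] at h1
    rcases (Metric.infDist_nonneg (x := w) (s := sᶜ)).eq_or_lt with h0 | h0
    · rw [← h0] at hc; simp [hw] at hc
    · have : Metric.infDist w sᶜ / D * ‖v‖ < Metric.infDist w sᶜ / D * D := by gcongr
      rw [div_mul_cancel₀ _ hD0.ne'] at this
      linarith
  have hmem := hs (key x hx) (key y hy) ha hb hab
  have : a • (x + (p / D) • v) + b • (y + (q / D) • v) = z := by
    have h1 : a • (x + (p / D) • v) + b • (y + (q / D) • v)
      = (a • x + b • y) + ((a * p + b * q) / D) • v := by module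
    rw [h1, ← hD, div_self hD0.ne', one_smul, hv]; abel
  rw [this] at hmem
  exact hz hmem

theorem concaveOn_interp_normalForm (hΩconv : Convex ℝ Ω) (h : ℝ × ℝ) (a b α β : ℝ) :
    ConcaveOn ℝ Ω fun z => interp a b α β (normalForm h z) := by
  refine ⟨hΩconv, fun x _ y _ s t _ _ hst => le_of_eq ?_⟩
  obtain rfl : t = 1 - s := by linarith
  simp only [normalForm_add, normalForm_smul, interp, smul_eq_mul]
  ring

theorem exists_lipschitzWith_interp_normalForm (h : ℝ × ℝ) (a b α β : ℝ) :
    ∃ K, LipschitzWith K fun z => interp a b α β (normalForm h z) := by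
  let L : ℝ × ℝ →L[ℝ] ℝ := ((β - α) / (b - a)) •
    ((-h.2) • ContinuousLinearMap.fst ℝ ℝ ℝ + h.1 • ContinuousLinearMap.snd ℝ ℝ ℝ)
  have e : (fun z => interp a b α β (normalForm h z)) =
      fun z => L z + (α * b - β * a) / (b - a) := by
    funext z
    simp only [L, interp, normalForm, _root_.smul_apply,
      _root_.add_apply, ContinuousLinearMap.coe_fst', ContinuousLinearMap.coe_snd',
      smul_eq_mul]
    ring
  rw [e]
  exact ⟨_, L.lipschitz.add (LipschitzWith.const _)⟩

theorem exists_roof (hΩc : IsCompact Ω) (hΩconv : Convex ℝ Ω) {h P Q : ℝ × ℝ}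
    (hP : P ∈ interior Ω) (hQ : Q ∈ interior Ω) (hPQ : normalForm h P = normalForm h Q)
    (hPI : normalForm h P ∈ Ioo (sInf (normalForm h '' Ω)) (sSup (normalForm h '' Ω))) :
    ∃ u, MemU Ω u ∧ 1 ≤ u P ∧ 1 ≤ u Q ∧
      (∀ z ∈ Ω, u z ≤ interp (sInf (normalForm h '' Ω)) (normalForm h P) 0 1 (normalForm h z)) ∧
      (∀ z ∈ Ω, u z ≤ interp (normalForm h P) (sSup (normalForm h '' Ω)) 1 0 (normalForm h z)) := by
  set c := sInf (normalForm h '' Ω)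
  set d := sSup (normalForm h '' Ω)
  set x := normalForm h P with hx
  have hxc : 0 < x - c := sub_pos.2 hPI.1
  have hdx : 0 < d - x := sub_pos.2 hPI.2
  have hcne : (Ωᶜ).Nonempty := by
    rw [nonempty_compl]; rintro rfl; exact noncompact_univ (ℝ × ℝ) hΩc
  have hposd : ∀ z ∈ interior Ω, 0 < Metric.infDist z Ωᶜ := by
    intro z hz
    rw [← Metric.infDist_closure, closure_compl]
    exact (isClosed_compl_iff.2 isOpen_interior).notMem_iff_infDist_pos
      (by rw [← closure_compl]; exact hcne.closure) |>.1 (by simpa using hz)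
  set r := min (Metric.infDist P Ωᶜ) (Metric.infDist Q Ωᶜ)
  have hr : 0 < r := lt_min (hposd P hP) (hposd Q hQ)
  obtain ⟨K₁, hK₁⟩ := exists_lipschitzWith_interp_normalForm h c x 0 1
  obtain ⟨K₂, hK₂⟩ := exists_lipschitzWith_interp_normalForm h x d 1 0
  have hK₀ := (lipschitzWith_smul r⁻¹).comp (Metric.lipschitz_infDist_pt (Ωᶜ : Set (ℝ × ℝ)))
  have hLip := hK₀.min (hK₁.min hK₂)
  refine ⟨_, ⟨hLip.continuous.continuousOn, ?_, ?_, ⟨_, fun z _ g hg => hg.le_of_lipschitz hLip⟩⟩,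
    ?_, ?_, fun z _ => (min_le_right _ _).trans (min_le_left _ _),
    fun z _ => (min_le_right _ _).trans (min_le_right _ _)⟩
  · exact ((concaveOn_infDist_compl hΩconv).smul (inv_nonneg.2 hr.le)).inf
      ((concaveOn_interp_normalForm hΩconv h c x 0 1).inf
        (concaveOn_interp_normalForm hΩconv h x d 1 0))
  · intro z hz
    have hzΩ : z ∈ Ω := hΩc.isClosed.frontier_subset hz
    have h0 : Metric.infDist z Ωᶜ = 0 := by
      rw [← Metric.infDist_closure]
      exact Metric.infDist_zero_of_mem (frontier_eq_closure_inter_closure (s := Ω) ▸ hz).2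
    obtain ⟨hzc, hzd⟩ := normalForm_mem_Icc hΩc h hzΩ
    simp only [Function.comp_apply, h0, smul_zero]
    refine min_eq_left (le_min ?_ ?_)
    · rw [interp]; exact div_nonneg (by linarith) hxc.le
    · rw [interp]; exact div_nonneg (by linarith) hdx.le
  · refine le_min ?_ (le_min ?_ ?_)
    · simp only [Function.comp_apply, smul_eq_mul]
      rw [inv_mul_eq_div, one_le_div hr]; exact min_le_left _ _
    · rw [interp, ← hx, le_div_iff₀ hxc]; linarith
    · rw [interp, ← hx, le_div_iff₀ hdx]; linarith
  · refine le_min ?_ (le_min ?_ ?_)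
    · simp only [Function.comp_apply, smul_eq_mul]
      rw [inv_mul_eq_div, one_le_div hr]; exact min_le_right _ _
    · rw [interp, ← hPQ, le_div_iff₀ hxc]; linarith
    · rw [interp, ← hPQ, le_div_iff₀ hdx]; linarith

theorem exists_ratio_ge_of_orthogonal (hΩc : IsCompact Ω) (hΩconv : Convex ℝ Ω)
    (hΩint : (interior Ω).Nonempty) {W w ε : ℝ}
    (hW : ∀ h : ℝ × ℝ, h.1 ^ 2 + h.2 ^ 2 = 1 → widthPar Ω h ≤ W) (hε : ε ∈ Ioo (0 : ℝ) 1)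
    {h₁ h₂ : ℝ × ℝ} (hh₁ : h₁.1 ^ 2 + h₁.2 ^ 2 = 1) (hh₂ : h₂.1 ^ 2 + h₂.2 ^ 2 = 1)
    (hw₁ : widthPar Ω h₁ = W) (hw₂ : widthPar Ω h₂ = w)
    (horth : h₁.1 * h₂.1 + h₁.2 * h₂.2 = 0) :
    ∃ u, MemU Ω u ∧ (∃ z ∈ Ω, u z ≠ 0) ∧
      (2 - ε) * (W / w) ≤ L1N Ω (uh h₁ u) / L1N Ω (uh h₂ u) := by
  obtain ⟨z₀, hz₀⟩ := hΩint
  have hΩint : (interior Ω).Nonempty := ⟨z₀, hz₀⟩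
  have hΩne := hΩint.mono interior_subset
  have hW0 : 0 < W := hw₁ ▸ widthPar_pos hΩc hΩconv hΩint hh₁
  obtain ⟨P, hP, hPm⟩ := exists_normalForm_eq_sInf hΩc hΩne h₁
  obtain ⟨Q, hQ, hQm⟩ := exists_normalForm_eq_sSup hΩc hΩne h₁
  have hPQ : normalForm h₁ Q - normalForm h₁ P = W := by rw [hPm, hQm, ← widthPar_eq, hw₁]
  obtain ⟨e1, e2⟩ := eq_smul_normal hh₁ (sq_add_sq_le_of_widthPar_le hΩc hW hP hQ)
    (by rw [normalForm_sub, hPQ]) hW0.le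
  have hlevel : normalForm h₂ Q - normalForm h₂ P = 0 := by
    rw [← normalForm_sub, normalForm, e1, e2]; linear_combination W * horth
  have hcombo : ∀ z ∈ Ω, (1 - ε) • z + ε • z₀ ∈ interior Ω := fun z hz =>
    hΩconv.combo_self_interior_mem_interior hz hz₀ (by linarith [hε.2]) hε.1 (by ring)
  set P' := (1 - ε) • P + ε • z₀ with hP'
  set Q' := (1 - ε) • Q + ε • z₀ with hQ'
  have hdiff : ∀ h, normalForm h Q' - normalForm h P' =
      (1 - ε) * (normalForm h Q - normalForm h P) := by
    intro h; simp only [hP', hQ', normalForm_add, normalForm_smul]; ring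
  have hPI : normalForm h₂ P' ∈ Ioo (sInf (normalForm h₂ '' Ω)) (sSup (normalForm h₂ '' Ω)) := by
    rw [← normalForm_image_interior hΩc hΩconv hΩint hh₂]
    exact mem_image_of_mem _ (hcombo P hP)
  have hlevel' := hdiff h₂
  rw [hlevel, mul_zero] at hlevel'
  obtain ⟨u, hu, huP, huQ, hl, hr⟩ := exists_roof hΩc hΩconv (hcombo P hP) (hcombo Q hQ)
    (sub_eq_zero.1 hlevel').symm hPI
  have hP'Ω := interior_subset (hcombo P hP)
  have hne : ∃ z ∈ Ω, u z ≠ 0 := ⟨P', hP'Ω, by linarith⟩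
  refine ⟨u, hu, hne, ?_⟩
  have hd₁ := hdiff h₁
  rw [hPQ] at hd₁
  have hA := L1N_ge_of_superlevel hΩc hΩconv hΩint hu hh₁ zero_le_one hP'Ω
    (interior_subset (hcombo Q hQ)) huP huQ (sub_nonneg.1 (by
      rw [hd₁]; exact mul_nonneg (by linarith [hε.2]) hW0.le))
  rw [hd₁, hw₁] at hA
  have hB := L1N_le_of_le_interp hΩc hΩconv hΩint hu hh₂ hPI hl hr
  rw [hw₂] at hB
  have hBpos := L1N_pos hΩc hΩconv hΩint hu hne hh₂
  calc (2 - ε) * (W / w) = ((2 - ε) * W) / w := by ring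
    _ ≤ ((2 - ε) * W) / L1N Ω (uh h₂ u) :=
      div_le_div_of_nonneg_left (mul_nonneg (by linarith [hε.2]) hW0.le) hBpos hB
    _ ≤ _ := by gcongr; linarith

end Roof

/-- Theorem 5: the supremum of `‖u_{h₁}‖₁ / ‖u_{h₂}‖₁` over nonzero
`u ∈ 𝒰_Ω` and unit vectors `h₁, h₂` equals `2 wmax / wmin` iff there exist orthogonal unit
vectors `h₁, h₂` realizing the widths `wmax` and `wmin` respectively. -/
theorem stmt_10 (Ω : Set (ℝ × ℝ)) (hΩc : IsCompact Ω) (hΩconv : Convex ℝ Ω)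
    (hΩint : (interior Ω).Nonempty)
    (wmax wmin : ℝ)
    (hmax : IsGreatest {w : ℝ | ∃ h : ℝ × ℝ, h.1 ^ 2 + h.2 ^ 2 = 1 ∧ w = widthPar Ω h} wmax)
    (hmin : IsLeast {w : ℝ | ∃ h : ℝ × ℝ, h.1 ^ 2 + h.2 ^ 2 = 1 ∧ w = widthPar Ω h} wmin) :
    sSup {r : ℝ | ∃ (u : ℝ × ℝ → ℝ) (h₁ h₂ : ℝ × ℝ), MemU Ω u ∧ (∃ z ∈ Ω, u z ≠ 0) ∧
        h₁.1 ^ 2 + h₁.2 ^ 2 = 1 ∧ h₂.1 ^ 2 + h₂.2 ^ 2 = 1 ∧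
        r = L1N Ω (uh h₁ u) / L1N Ω (uh h₂ u)} = 2 * (wmax / wmin) ↔
      ∃ h₁ h₂ : ℝ × ℝ, h₁.1 ^ 2 + h₁.2 ^ 2 = 1 ∧ h₂.1 ^ 2 + h₂.2 ^ 2 = 1 ∧
        widthPar Ω h₁ = wmax ∧ widthPar Ω h₂ = wmin ∧
        h₁.1 * h₂.1 + h₁.2 * h₂.2 = 0 := by
  have hW : ∀ h : ℝ × ℝ, h.1 ^ 2 + h.2 ^ 2 = 1 → widthPar Ω h ≤ wmax :=
    fun h hh => hmax.2 ⟨h, hh, rfl⟩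
  have hw : ∀ h : ℝ × ℝ, h.1 ^ 2 + h.2 ^ 2 = 1 → wmin ≤ widthPar Ω h :=
    fun h hh => hmin.2 ⟨h, hh, rfl⟩
  have hw0 : 0 < wmin := by
    obtain ⟨h, hh, rfl⟩ := hmin.1
    exact widthPar_pos hΩc hΩconv hΩint hh
  have hW0 : 0 < wmax := by
    obtain ⟨h, hh, rfl⟩ := hmax.1
    exact widthPar_pos hΩc hΩconv hΩint hh
  have hratio : 0 < wmax / wmin := div_pos hW0 hw0
  constructor
  · intro hsup
    refine exists_orthogonal_of_ratio hΩc hΩconv hΩint hW hw0 hw fun δ hδ => ?_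
    have hlt : 2 * (wmax / wmin) * (1 - δ ^ 2) < 2 * (wmax / wmin) := by
      nlinarith [mul_pos hratio (pow_pos hδ.1 2)]
    obtain ⟨r, ⟨u, h₁, h₂, hu, hne, hh₁, hh₂, rfl⟩, hr⟩ := exists_lt_of_lt_csSup
      (nonempty_iff_ne_empty.2 fun he => by rw [he, Real.sSup_empty] at hsup; linarith)
      (hlt.trans_eq hsup.symm)
    exact ⟨u, h₁, h₂, hu, hne, hh₁, hh₂, hr⟩
  · rintro ⟨h₁, h₂, hh₁, hh₂, hw₁, hw₂, horth⟩
    have hex : ∀ ε ∈ Ioo (0 : ℝ) 1, _ := fun ε hε =>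
      exists_ratio_ge_of_orthogonal hΩc hΩconv hΩint hW hε hh₁ hh₂ hw₁ hw₂ horth
    refine csSup_eq_of_forall_le_of_forall_lt_exists_gt ?_ ?_ ?_
    · obtain ⟨u, hu, hne, -⟩ := hex (1 / 2) ⟨by norm_num, by norm_num⟩
      exact ⟨_, u, h₁, h₂, hu, hne, hh₁, hh₂, rfl⟩
    · rintro r ⟨u, k₁, k₂, hu, hne, hk₁, hk₂, rfl⟩
      exact L1N_ratio_le hΩc hΩconv hΩint hW hw0 hw hu hne hk₁ hk₂
    · intro b hb
      obtain ⟨ε, hε0, hε⟩ := exists_between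
        (lt_min zero_lt_one (div_pos (sub_pos.2 hb) hratio))
      obtain ⟨u, hu, hne, hle⟩ := hex ε ⟨hε0, hε.trans_le (min_le_left _ _)⟩
      refine ⟨_, ⟨u, h₁, h₂, hu, hne, hh₁, hh₂, rfl⟩, lt_of_lt_of_le ?_ hle⟩
      have := hε.trans_le (min_le_right _ _)
      rw [lt_div_iff₀ hratio] at this
      linarith
end

section
/- Let p ∈ (1, ∞). Write Ω = {(x, y) : x ∈ [a, b], φ₁(x) ≤ y ≤ φ₂(x)} with φ₁ convex and φ₂ concave on [a, b]. Suppose at least one of the two vertical lines of support of Ω is not angular, i.e. φ₂(a) > φ₁(a), or φ₂(b) > φ₁(b), or at least one of the one-sided derivatives φ₂'(a+), −φ₁'(a+), −φ₂'(b−), φ₁'(b−) equals +∞. Then sup{ ‖u_x‖_p / ‖u_y‖_p : u ∈ 𝒰_Ω, u ≢ 0 } = +∞, i.e. for every C > 0 there exists u ∈ 𝒰_Ω with ‖u_x‖_p > C ‖u_y‖_p. -/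
open Set MeasureTheory
open scoped ENNReal

/-- The affine function with value `k.1` at `P` and gradient `k.2`. -/
def affineAt (P : ℝ × ℝ) (k : ℝ × ℝ × ℝ) (z : ℝ × ℝ) : ℝ :=
  k.1 + k.2.1 * (z.1 - P.1) + k.2.2 * (z.2 - P.2)

/-- Affine functions nonnegative on `Ω`, normalized at `P` to the value `1` if they are
nonnegative at `Q` and to the value `M` if they are nonpositive at `Q`. -/
def supportFamily (Ω : Set (ℝ × ℝ)) (P Q : ℝ × ℝ) (M : ℝ) : Set (ℝ × ℝ × ℝ) :=
  {k | (∀ z ∈ Ω, 0 ≤ affineAt P k z) ∧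
    ((k.1 = 1 ∧ 0 ≤ affineAt P k Q) ∨ (k.1 = M ∧ affineAt P k Q ≤ 0))}

/-- The lower envelope of `supportFamily Ω P Q M`. -/
noncomputable def envelope (Ω : Set (ℝ × ℝ)) (P Q : ℝ × ℝ) (M : ℝ) (z : ℝ × ℝ) : ℝ :=
  sInf ((fun k => affineAt P k z) '' supportFamily Ω P Q M)

lemma continuous_affineAt_left (P z : ℝ × ℝ) : Continuous fun k => affineAt P k z := by
  unfold affineAt
  fun_prop

/-- An affine function that is nonnegative around `P` has gradient controlled by its value. -/
lemma abs_coeff_le {Ω : Set (ℝ × ℝ)} {P : ℝ × ℝ} {ρ : ℝ} (hρ : 0 < ρ)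
    (hball : Metric.closedBall P ρ ⊆ Ω) {k : ℝ × ℝ × ℝ} (hk : ∀ z ∈ Ω, 0 ≤ affineAt P k z) :
    (|k.2.1| + |k.2.2|) * ρ ≤ k.1 := by
  have key : ∀ e₁ e₂ : ℝ, |e₁| ≤ ρ → |e₂| ≤ ρ → 0 ≤ k.1 + k.2.1 * e₁ + k.2.2 * e₂ := by
    intro e₁ e₂ h₁ h₂
    have := hk (P.1 + e₁, P.2 + e₂) (hball (by
      simp only [Metric.mem_closedBall, Prod.dist_eq, Real.dist_eq, add_sub_cancel_left]
      exact max_le h₁ h₂))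
    simpa [affineAt] using this
  have hp : |ρ| ≤ ρ := (abs_of_pos hρ).le
  have hn : |-ρ| ≤ ρ := by rw [abs_neg]; exact hp
  have h1 := key ρ ρ hp hp
  have h2 := key ρ (-ρ) hp hn
  have h3 := key (-ρ) ρ hn hp
  have h4 := key (-ρ) (-ρ) hn hn
  rcases abs_cases k.2.1 with ⟨h, _⟩ | ⟨h, _⟩ <;> rcases abs_cases k.2.2 with ⟨h', _⟩ | ⟨h', _⟩ <;>
    rw [h, h'] <;> nlinarith

lemma half_le_affineAt {Ω : Set (ℝ × ℝ)} {P : ℝ × ℝ} {ρ : ℝ} (hρ : 0 < ρ)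
    (hball : Metric.closedBall P ρ ⊆ Ω) {k : ℝ × ℝ × ℝ} (hk : ∀ z ∈ Ω, 0 ≤ affineAt P k z)
    {w : ℝ × ℝ} (hw : w ∈ Metric.closedBall P (ρ / 2)) : k.1 / 2 ≤ affineAt P k w := by
  have h := abs_coeff_le hρ hball hk
  rw [Metric.mem_closedBall, Prod.dist_eq, Real.dist_eq, Real.dist_eq, max_le_iff] at hw
  have h1 : -(|k.2.1| * (ρ / 2)) ≤ k.2.1 * (w.1 - P.1) := by
    have := neg_abs_le (k.2.1 * (w.1 - P.1))
    rw [abs_mul] at this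
    nlinarith [mul_le_mul_of_nonneg_left hw.1 (abs_nonneg k.2.1)]
  have h2 : -(|k.2.2| * (ρ / 2)) ≤ k.2.2 * (w.2 - P.2) := by
    have := neg_abs_le (k.2.2 * (w.2 - P.2))
    rw [abs_mul] at this
    nlinarith [mul_le_mul_of_nonneg_left hw.2 (abs_nonneg k.2.2)]
  unfold affineAt
  linarith

lemma affineAt_sub_le (P : ℝ × ℝ) (k : ℝ × ℝ × ℝ) (z w : ℝ × ℝ) :
    affineAt P k z - affineAt P k w ≤ (|k.2.1| + |k.2.2|) * dist z w := by
  have h1 : k.2.1 * (z.1 - w.1) ≤ |k.2.1| * dist z w := by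
    refine (le_abs_self _).trans ?_
    rw [abs_mul]
    exact mul_le_mul_of_nonneg_left (le_max_left _ _) (abs_nonneg _)
  have h2 : k.2.2 * (z.2 - w.2) ≤ |k.2.2| * dist z w := by
    refine (le_abs_self _).trans ?_
    rw [abs_mul]
    exact mul_le_mul_of_nonneg_left (le_max_right _ _) (abs_nonneg _)
  unfold affineAt
  linarith

section Envelope

variable {Ω : Set (ℝ × ℝ)} {P Q : ℝ × ℝ} {M ρ : ℝ}

lemma one_le_fst_of_mem (hM : 1 ≤ M) {k : ℝ × ℝ × ℝ} (hk : k ∈ supportFamily Ω P Q M) :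
    1 ≤ k.1 ∧ k.1 ≤ M := by
  rcases hk.2 with h | h
  · exact ⟨h.1.ge, h.1.le.trans hM⟩
  · exact ⟨h.1 ▸ hM, h.1.le⟩

lemma supportFamily_coeff_le (hM : 1 ≤ M) (hρ : 0 < ρ) (hball : Metric.closedBall P ρ ⊆ Ω)
    {k : ℝ × ℝ × ℝ} (hk : k ∈ supportFamily Ω P Q M) : |k.2.1| + |k.2.2| ≤ M / ρ := by
  rw [le_div_iff₀ hρ]
  exact (abs_coeff_le hρ hball hk.1).trans (one_le_fst_of_mem hM hk).2

lemma isCompact_supportFamily (hM : 1 ≤ M) (hρ : 0 < ρ) (hball : Metric.closedBall P ρ ⊆ Ω) :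
    IsCompact (supportFamily Ω P Q M) := by
  refine IsCompact.of_isClosed_subset
    (isCompact_Icc.prod (isCompact_Icc.prod isCompact_Icc) :
      IsCompact (Icc 1 M ×ˢ (Icc (-(M / ρ)) (M / ρ) ×ˢ Icc (-(M / ρ)) (M / ρ)))) ?_ ?_
  · have e : supportFamily Ω P Q M = (⋂ z ∈ Ω, {k : ℝ × ℝ × ℝ | 0 ≤ affineAt P k z}) ∩
        (({k | k.1 = 1} ∩ {k | 0 ≤ affineAt P k Q}) ∪ ({k | k.1 = M} ∩ {k | affineAt P k Q ≤ 0})) := by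
      ext k
      simp [supportFamily]
    rw [e]
    refine (isClosed_biInter fun z _ =>
      isClosed_le continuous_const (continuous_affineAt_left P z)).inter
      (((isClosed_eq continuous_fst continuous_const).inter ?_).union
        ((isClosed_eq continuous_fst continuous_const).inter ?_))
    · exact isClosed_le continuous_const (continuous_affineAt_left P Q)
    · exact isClosed_le (continuous_affineAt_left P Q) continuous_const
  · intro k hk
    have h := supportFamily_coeff_le hM hρ hball hk
    exact ⟨one_le_fst_of_mem hM hk,
      abs_le.1 (by linarith [abs_nonneg k.2.2]), abs_le.1 (by linarith [abs_nonneg k.2.1])⟩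

lemma nonempty_supportFamily : (supportFamily Ω P Q M).Nonempty :=
  ⟨(1, 0, 0), fun z _ => by simp [affineAt], Or.inl ⟨rfl, by simp [affineAt]⟩⟩

lemma exists_envelope_eq (hM : 1 ≤ M) (hρ : 0 < ρ) (hball : Metric.closedBall P ρ ⊆ Ω)
    (z : ℝ × ℝ) : ∃ k ∈ supportFamily Ω P Q M, envelope Ω P Q M z = affineAt P k z := by
  obtain ⟨k, hk, h⟩ := ((isCompact_supportFamily hM hρ hball).image
    (continuous_affineAt_left P z)).sInf_mem (nonempty_supportFamily.image _)
  exact ⟨k, hk, h.symm⟩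

lemma envelope_le (hM : 1 ≤ M) (hρ : 0 < ρ) (hball : Metric.closedBall P ρ ⊆ Ω)
    {k : ℝ × ℝ × ℝ} (hk : k ∈ supportFamily Ω P Q M) (z : ℝ × ℝ) :
    envelope Ω P Q M z ≤ affineAt P k z :=
  csInf_le ((isCompact_supportFamily hM hρ hball).image
    (continuous_affineAt_left P z)).bddBelow (mem_image_of_mem _ hk)

lemma lipschitzWith_envelope (hM : 1 ≤ M) (hρ : 0 < ρ) (hball : Metric.closedBall P ρ ⊆ Ω) :
    LipschitzWith (M / ρ).toNNReal (envelope Ω P Q M) := by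
  refine LipschitzWith.of_le_add_mul _ fun z w => ?_
  obtain ⟨k, hk, h⟩ := exists_envelope_eq (Q := Q) hM hρ hball w
  rw [Real.coe_toNNReal _ (by positivity), h]
  have h1 := envelope_le hM hρ hball hk z
  have h2 := affineAt_sub_le P k z w
  have h3 := mul_le_mul_of_nonneg_right (supportFamily_coeff_le hM hρ hball hk)
    (dist_nonneg (x := z) (y := w))
  linarith

lemma concaveOn_envelope (hM : 1 ≤ M) (hρ : 0 < ρ) (hball : Metric.closedBall P ρ ⊆ Ω)
    (hconv : Convex ℝ Ω) : ConcaveOn ℝ Ω (envelope Ω P Q M) := by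
  refine ⟨hconv, fun z _ w _ s t hs ht hst => ?_⟩
  obtain ⟨k, hk, h⟩ := exists_envelope_eq (Q := Q) hM hρ hball (s • z + t • w)
  have h1 := mul_le_mul_of_nonneg_left (envelope_le hM hρ hball hk z) hs
  have h2 := mul_le_mul_of_nonneg_left (envelope_le hM hρ hball hk w) ht
  have h3 : affineAt P k (s • z + t • w) = s * affineAt P k z + t * affineAt P k w := by
    obtain rfl : t = 1 - s := by linarith
    simp only [affineAt, Prod.fst_add, Prod.snd_add, Prod.smul_fst, Prod.smul_snd, smul_eq_mul]
    ring
  rw [h, h3, smul_eq_mul, smul_eq_mul]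
  linarith

/-- On a segment from `P` to a point that is not interior, the envelope is below the linear
interpolation between `M` and `0`. -/
lemma envelope_segment_le (hM : 1 ≤ M) (hρ : 0 < ρ) (hball : Metric.closedBall P ρ ⊆ Ω)
    (hconv : Convex ℝ Ω) {w : ℝ × ℝ} (hw : w ∉ interior Ω) {t : ℝ} (ht : t ≤ 1) :
    envelope Ω P Q M (P + t • (w - P)) ≤ (1 - t) * M := by
  obtain ⟨g, hg⟩ := geometric_hahn_banach_open_point hconv.interior isOpen_interior hw
  have hP : P ∈ interior Ω := mem_interior.2
    ⟨_, Metric.ball_subset_closedBall.trans hball, Metric.isOpen_ball, Metric.mem_ball_self hρ⟩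
  have hclos : ∀ z ∈ Ω, g z ≤ g w := by
    have : closure (interior Ω) ⊆ {z | g z ≤ g w} :=
      closure_minimal (fun z hz => (hg z hz).le) (isClosed_le g.continuous continuous_const)
    intro z hz
    exact this ((hconv.closure_interior_eq_closure_of_nonempty_interior ⟨P, hP⟩).ge
      (subset_closure hz))
  set d := g w - g P with hd
  have hd0 : 0 < d := sub_pos.2 (hg P hP)
  have hgz : ∀ z : ℝ × ℝ, g z = z.1 * g (1, 0) + z.2 * g (0, 1) := by
    intro z
    have : z = z.1 • ((1 : ℝ), (0 : ℝ)) + z.2 • ((0 : ℝ), (1 : ℝ)) := by ext <;> simp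
    conv_lhs => rw [this]
    rw [map_add, map_smul, map_smul, smul_eq_mul, smul_eq_mul]
  let k : ℝ → ℝ × ℝ × ℝ := fun m => (m, -(m / d * g (1, 0)), -(m / d * g (0, 1)))
  have hk : ∀ m z, affineAt P (k m) z = m / d * (g w - g z) := by
    intro m z
    have e : m = m / d * (g w - g P) := by rw [← hd]; field_simp
    have : affineAt P (k m) z = m - m / d * (g z - g P) := by
      rw [hgz z, hgz P]; simp only [affineAt, k]; ring
    rw [this]; linear_combination e
  have hseg : ∀ m, affineAt P (k m) (P + t • (w - P)) = (1 - t) * m := by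
    intro m
    rw [hk, map_add, map_smul, map_sub, smul_eq_mul]
    have : g w - (g P + t * (g w - g P)) = (1 - t) * d := by rw [hd]; ring
    rw [this]; field_simp
  have hpos : ∀ m, 0 ≤ m → ∀ z ∈ Ω, 0 ≤ affineAt P (k m) z := by
    intro m hm z hz
    rw [hk]
    exact mul_nonneg (div_nonneg hm hd0.le) (sub_nonneg.2 (hclos z hz))
  rcases le_total (g Q) (g w) with hQ | hQ
  · have hmem : k 1 ∈ supportFamily Ω P Q M := ⟨hpos 1 zero_le_one, Or.inl ⟨rfl, by
      rw [hk]; exact mul_nonneg (div_nonneg zero_le_one hd0.le) (sub_nonneg.2 hQ)⟩⟩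
    refine (envelope_le hM hρ hball hmem _).trans ?_
    rw [hseg]
    exact mul_le_mul_of_nonneg_left hM (sub_nonneg.2 ht)
  · have hmem : k M ∈ supportFamily Ω P Q M := ⟨hpos M (by linarith), Or.inr ⟨rfl, by
      rw [hk]
      exact mul_nonpos_of_nonneg_of_nonpos (div_nonneg (by linarith) hd0.le) (sub_nonpos.2 hQ)⟩⟩
    exact (envelope_le hM hρ hball hmem _).trans (hseg M).le

/-- Wherever the envelope is differentiable, its gradient is that of an active affine function. -/
lemma exists_gradient_eq (hM : 1 ≤ M) (hρ : 0 < ρ) (hball : Metric.closedBall P ρ ⊆ Ω)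
    {z : ℝ × ℝ} {g : (ℝ × ℝ) →L[ℝ] ℝ} (hg : HasFDerivAt (envelope Ω P Q M) g z) :
    ∃ k ∈ supportFamily Ω P Q M, envelope Ω P Q M z = affineAt P k z ∧
      ∀ h : ℝ × ℝ, g h = k.2.1 * h.1 + k.2.2 * h.2 := by
  obtain ⟨k, hk, h⟩ := exists_envelope_eq (Q := Q) hM hρ hball z
  refine ⟨k, hk, h, ?_⟩
  have hA : HasFDerivAt (affineAt P k) (k.2.1 • ContinuousLinearMap.fst ℝ ℝ ℝ +
      k.2.2 • ContinuousLinearMap.snd ℝ ℝ ℝ) z := by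
    unfold affineAt
    exact (((hasFDerivAt_fst.sub_const P.1).const_mul k.2.1).const_add k.1).add
      ((hasFDerivAt_snd.sub_const P.2).const_mul k.2.2)
  have hmin : IsLocalMin (affineAt P k - envelope Ω P Q M) z := by
    refine Filter.Eventually.of_forall fun w => ?_
    simp only [Pi.sub_apply, h, sub_self]
    exact sub_nonneg.2 (envelope_le hM hρ hball hk w)
  have h0 := hmin.hasFDerivAt_eq_zero (hA.sub hg)
  intro v
  have := congrArg (fun L : (ℝ × ℝ) →L[ℝ] ℝ => L v) (sub_eq_zero.1 h0)
  simpa using this.symm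

lemma memU_envelope (hM : 1 ≤ M) (hρ : 0 < ρ) (hball : Metric.closedBall P ρ ⊆ Ω)
    (hconv : Convex ℝ Ω) (hclosed : IsClosed Ω) : MemU Ω (envelope Ω P Q M) := by
  have hlip := lipschitzWith_envelope (Q := Q) hM hρ hball
  refine ⟨hlip.continuous.continuousOn, concaveOn_envelope hM hρ hball hconv, fun z hz => ?_,
    (M / ρ).toNNReal, fun z _ g hg => ?_⟩
  · apply le_antisymm
    · simpa using envelope_segment_le (Q := Q) hM hρ hball hconv hz.2 le_rfl
    · obtain ⟨k, hk, h⟩ := exists_envelope_eq (Q := Q) hM hρ hball z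
      rw [h]
      exact hk.1 z (hclosed.frontier_subset hz)
  · exact hg.le_of_lipschitz hlip

end Envelope

/-- The cone with apex `P` over the copy of `Metric.closedBall P (ρ / 2)` shrunk by the factor `τ`
towards `Q`. -/
def sector (P Q : ℝ × ℝ) (ρ τ : ℝ) : Set (ℝ × ℝ) :=
  {z | ∃ t : ℝ, 0 ≤ t ∧ ∃ w ∈ Metric.closedBall P (ρ / 2),
    z = P + t • ((1 - τ) • (Q - P) + τ • (w - P))}

section Sector

variable {Ω : Set (ℝ × ℝ)} {P Q : ℝ × ℝ} {M ρ τ : ℝ}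

lemma exists_shrunk_ball_disjoint (hclosed : IsClosed Ω) (hQ : Q ∉ Ω) (P : ℝ × ℝ) (ρ : ℝ) :
    ∃ τ : ℝ, 0 < τ ∧ τ ≤ 1 ∧ ∀ w ∈ Metric.closedBall P (ρ / 2),
      P + ((1 - τ) • (Q - P) + τ • (w - P)) ∉ Ω := by
  obtain ⟨ε, hε, hsub⟩ := Metric.isOpen_iff.1 hclosed.isOpen_compl Q hQ
  obtain ⟨c, hc, hcε⟩ := exists_pos_mul_lt hε (ρ / 2 + dist P Q)
  refine ⟨min 1 c, lt_min one_pos hc, min_le_left _ _, fun w hw => hsub ?_⟩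
  have hτ : 0 < min 1 c := lt_min one_pos hc
  have e : P + ((1 - min 1 c) • (Q - P) + min 1 c • (w - P)) - Q = min 1 c • (w - Q) := by module
  rw [Metric.mem_ball, dist_eq_norm, e, norm_smul, Real.norm_of_nonneg hτ.le, ← dist_eq_norm]
  have h1 : dist w Q ≤ ρ / 2 + dist P Q :=
    (dist_triangle w P Q).trans (add_le_add_left (Metric.mem_closedBall.1 hw) _)
  have h2 := mul_le_mul (min_le_right 1 c) h1 dist_nonneg hc.le
  linarith

lemma le_affineAt_of_mem_sector (hρ : 0 < ρ) (hball : Metric.closedBall P ρ ⊆ Ω)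
    (hconv : Convex ℝ Ω) (hτ : 0 < τ) (hτ1 : τ ≤ 1)
    (hdisj : ∀ w ∈ Metric.closedBall P (ρ / 2), P + ((1 - τ) • (Q - P) + τ • (w - P)) ∉ Ω)
    {k : ℝ × ℝ × ℝ} (hk : ∀ z ∈ Ω, 0 ≤ affineAt P k z) (hk1 : k.1 = 1)
    (hkQ : 0 ≤ affineAt P k Q) {z : ℝ × ℝ} (hz : z ∈ Ω) (hzs : z ∈ sector P Q ρ τ) :
    τ / 2 ≤ affineAt P k z := by
  obtain ⟨t, ht, w, hw, rfl⟩ := hzs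
  have ht1 : t ≤ 1 := by
    by_contra! h
    have hP : P ∈ Ω := hball (Metric.mem_closedBall_self hρ.le)
    have hm := hconv.add_smul_sub_mem hP hz (t := t⁻¹)
      ⟨inv_nonneg.2 ht, inv_le_one_of_one_le₀ h.le⟩
    rw [add_sub_cancel_left, smul_smul, inv_mul_cancel₀ (by linarith), one_smul] at hm
    exact hdisj w hw hm
  have hw' := half_le_affineAt hρ hball hk hw
  have e : affineAt P k (P + t • ((1 - τ) • (Q - P) + τ • (w - P))) =
      (1 - t) * k.1 + t * ((1 - τ) * affineAt P k Q + τ * affineAt P k w) := by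
    simp only [affineAt, Prod.fst_add, Prod.snd_add, Prod.fst_sub, Prod.snd_sub, Prod.smul_fst,
      Prod.smul_snd, smul_eq_mul]
    ring
  rw [e, hk1]
  rw [hk1] at hw'
  have h1 : 0 ≤ (1 - τ) * affineAt P k Q := mul_nonneg (sub_nonneg.2 hτ1) hkQ
  have h2 : τ * (1 / 2) ≤ τ * affineAt P k w := mul_le_mul_of_nonneg_left hw' hτ.le
  have h3 : t * (τ / 2) ≤ t * ((1 - τ) * affineAt P k Q + τ * affineAt P k w) :=
    mul_le_mul_of_nonneg_left (by linarith) ht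
  nlinarith

lemma volume_inter_sector_pos (hρ : 0 < ρ) (hball : Metric.closedBall P ρ ⊆ Ω)
    (hτ : 0 < τ) (hτ1 : τ ≤ 1) : 0 < volume (Ω ∩ sector P Q ρ τ) := by
  set t := ρ / (dist Q P + ρ) with ht
  have hD : 0 < dist Q P + ρ := add_pos_of_nonneg_of_pos dist_nonneg hρ
  have ht0 : 0 < t := div_pos hρ hD
  have htD : t * (dist Q P + ρ) = ρ := div_mul_cancel₀ _ hD.ne'
  refine lt_of_lt_of_le (Metric.measure_closedBall_pos volume (P + (t * (1 - τ)) • (Q - P))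
    (r := t * τ * (ρ / 2)) (by positivity)) (measure_mono fun z hz => ?_)
  rw [Metric.mem_closedBall, dist_eq_norm] at hz
  constructor
  · apply hball
    rw [Metric.mem_closedBall, dist_eq_norm]
    have e : z - P = (z - (P + (t * (1 - τ)) • (Q - P))) + (t * (1 - τ)) • (Q - P) := by module
    rw [e]
    refine (norm_add_le _ _).trans ?_
    rw [norm_smul, Real.norm_of_nonneg (mul_nonneg ht0.le (sub_nonneg.2 hτ1)), ← dist_eq_norm Q P]
    have h1 : t * (1 - τ) * dist Q P ≤ t * dist Q P :=
      mul_le_mul_of_nonneg_right (by nlinarith) dist_nonneg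
    have h2 : t * τ * (ρ / 2) ≤ t * ρ := by
      have : τ * (ρ / 2) ≤ ρ := by nlinarith
      nlinarith
    linarith
  · refine ⟨t, ht0.le, P + (t * τ)⁻¹ • (z - (P + (t * (1 - τ)) • (Q - P))), ?_, ?_⟩
    · rw [Metric.mem_closedBall, dist_eq_norm, add_sub_cancel_left, norm_smul,
        Real.norm_of_nonneg (by positivity), inv_mul_le_iff₀ (by positivity)]
      exact hz
    · rw [add_sub_cancel_left, smul_add, smul_smul, smul_smul, smul_smul,
        mul_inv_cancel₀ (by positivity)]
      module

/-- Removing from the part of `Ω` in a cone its shrunk copy leaves a layer of thickness of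
order `s`. -/
lemma volume_layer_ge (hfin : volume Ω ≠ ∞) {s : ℝ} (hs : 0 ≤ s) (hs1 : s ≤ 1) :
    s * volume.real (Ω ∩ sector P Q ρ τ) ≤ volume.real
      ((Ω ∩ sector P Q ρ τ) \ AffineMap.homothety P (1 - s) '' (Ω ∩ sector P Q ρ τ)) := by
  set G := Ω ∩ sector P Q ρ τ
  have hG : volume G ≠ ∞ := measure_ne_top_of_subset inter_subset_left hfin
  have himg : volume.real (AffineMap.homothety P (1 - s) '' G) = (1 - s) ^ 2 * volume.real G := by
    rw [Measure.real, Measure.addHaar_image_homothety, ENNReal.toReal_mul,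
      ENNReal.toReal_ofReal (abs_nonneg _)]
    simp [Module.finrank_prod, Measure.real]
  have hfin' : volume (AffineMap.homothety P (1 - s) '' G) ≠ ∞ := by
    rw [Measure.addHaar_image_homothety]
    exact ENNReal.mul_ne_top ENNReal.ofReal_ne_top hG
  have h1 : volume.real G ≤ volume.real (G \ AffineMap.homothety P (1 - s) '' G) +
      volume.real (AffineMap.homothety P (1 - s) '' G) := by
    refine le_trans (measureReal_mono ?_ ?_) (measureReal_union_le _ _)
    · rw [sdiff_union_self]; exact subset_union_left
    · rw [sdiff_union_self]; exact measure_union_ne_top hG hfin'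
  rw [himg] at h1
  have h2 : (1 - s) ^ 2 ≤ 1 - s := by nlinarith
  nlinarith [mul_le_mul_of_nonneg_right h2 (measureReal_nonneg (μ := volume) (s := G))]

/-- In the boundary layer, only affine functions that are nonpositive at `Q` are active. -/
lemma active_nonpos_of_mem_layer (hM : 1 ≤ M) (hρ : 0 < ρ) (hball : Metric.closedBall P ρ ⊆ Ω)
    (hconv : Convex ℝ Ω) (hτ : 0 < τ) (hτ1 : τ ≤ 1)
    (hdisj : ∀ w ∈ Metric.closedBall P (ρ / 2), P + ((1 - τ) • (Q - P) + τ • (w - P)) ∉ Ω)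
    {s : ℝ} (hs : 0 ≤ s) (hs1 : s < 1) (hsM : s * M < τ / 2) {z : ℝ × ℝ}
    (hz : z ∈ (Ω ∩ sector P Q ρ τ) \ AffineMap.homothety P (1 - s) '' (Ω ∩ sector P Q ρ τ))
    {k : ℝ × ℝ × ℝ} (hk : k ∈ supportFamily Ω P Q M)
    (hact : envelope Ω P Q M z = affineAt P k z) : k.1 = M ∧ affineAt P k Q ≤ 0 := by
  refine hk.2.resolve_left fun ⟨hk1, hkQ⟩ => ?_
  have hlow := le_affineAt_of_mem_sector hρ hball hconv hτ hτ1 hdisj hk.1 hk1 hkQ hz.1.1 hz.1.2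
  have hs' : 1 - s ≠ 0 := by linarith
  set w := P + (1 - s)⁻¹ • (z - P) with hw
  have hzw : P + (1 - s) • (w - P) = z := by
    rw [hw, add_sub_cancel_left, smul_smul, mul_inv_cancel₀ hs', one_smul, add_sub_cancel]
  have hwΩ : w ∉ interior Ω := by
    intro hwi
    refine hz.2 ⟨w, ⟨interior_subset hwi, ?_⟩, ?_⟩
    · obtain ⟨t, ht, v, hv, hzv⟩ := hz.1.2
      refine ⟨(1 - s)⁻¹ * t, mul_nonneg (inv_nonneg.2 (by linarith)) ht, v, hv, ?_⟩
      rw [hw, hzv, add_sub_cancel_left, smul_smul]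
    · rw [AffineMap.homothety_apply, vsub_eq_sub, vadd_eq_add, add_comm]
      exact hzw
  have hup := envelope_segment_le (Q := Q) hM hρ hball hconv hwΩ (t := 1 - s) (by linarith)
  rw [hzw, hact] at hup
  linarith

end Sector

/-- The gradient of an affine function that is nonnegative at two points seen from `Q` in the
directions `(η, 1)` and `(η, -1)` but nonpositive at `Q`. -/
lemma abs_snd_coeff_le {P Q : ℝ × ℝ} {η r₁ r₂ : ℝ} (hr₁ : 0 < r₁) (hr₂ : 0 < r₂)
    {k : ℝ × ℝ × ℝ} (h₁ : 0 ≤ affineAt P k (Q.1 + r₁ * η, Q.2 + r₁))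
    (h₂ : 0 ≤ affineAt P k (Q.1 + r₂ * η, Q.2 - r₂)) (hQ : affineAt P k Q ≤ 0) :
    |k.2.2| ≤ |η| * |k.2.1| := by
  simp only [affineAt] at h₁ h₂ hQ
  have e₁ : 0 ≤ k.2.1 * η + k.2.2 := nonneg_of_mul_nonneg_right (by linarith) hr₁
  have e₂ : 0 ≤ k.2.1 * η - k.2.2 := nonneg_of_mul_nonneg_right (by linarith) hr₂
  rw [← abs_mul, mul_comm η]
  exact (abs_le.2 ⟨by linarith, by linarith⟩).trans (le_abs_self _)

lemma LipschitzWith.integrableOn_abs_fderiv_apply_rpow {E : Type*} [NormedAddCommGroup E]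
    [NormedSpace ℝ E] [FiniteDimensional ℝ E] [MeasurableSpace E] [BorelSpace E] {μ : Measure E}
    {u : E → ℝ} {L : NNReal} (hu : LipschitzWith L u) {p : ℝ} (hp : 0 ≤ p) (h : E)
    {Ω : Set E} (hfin : μ Ω ≠ ∞) : IntegrableOn (fun z => |fderiv ℝ u z h| ^ p) Ω μ := by
  refine Measure.integrableOn_of_bounded (M := (L * ‖h‖) ^ p) hfin ?_ ?_
  · exact ((measurable_fderiv_apply_const ℝ u h).norm.pow_const p).aestronglyMeasurable
  · refine Filter.Eventually.of_forall fun z => ?_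
    rw [Real.norm_of_nonneg (by positivity)]
    refine Real.rpow_le_rpow (abs_nonneg _) ?_ hp
    exact (ContinuousLinearMap.le_opNorm _ h).trans
      (mul_le_mul_of_nonneg_right (norm_fderiv_le_of_lipschitz ℝ hu) (norm_nonneg _))

lemma LpN_mul_lt {Ω : Set (ℝ × ℝ)} {p C : ℝ} (hp : 0 < p) (hC : 0 ≤ C) {f g : ℝ × ℝ → ℝ}
    (h : C ^ p * ∫ z in Ω, |f z| ^ p < ∫ z in Ω, |g z| ^ p) : C * LpN Ω p f < LpN Ω p g := by
  have h0 : 0 ≤ ∫ z in Ω, |f z| ^ p := integral_nonneg fun z => by positivity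
  have e : C * LpN Ω p f = (C ^ p * ∫ z in Ω, |f z| ^ p) ^ (1 / p) := by
    rw [Real.mul_rpow (by positivity) h0, ← Real.rpow_mul hC, mul_one_div_cancel hp.ne',
      Real.rpow_one, LpN]
  rw [e, LpN]
  exact Real.rpow_lt_rpow (mul_nonneg (by positivity) h0) h (by positivity)

/-- If a point `Q` outside a convex body `Ω` sees points of `Ω` in the directions `(η, ±1)` with
`η` small, then the horizontal derivative can dominate the vertical one. -/
theorem exists_memU_of_visible {Ω : Set (ℝ × ℝ)} (hcomp : IsCompact Ω) (hconv : Convex ℝ Ω)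
    (hint : (interior Ω).Nonempty) {p : ℝ} (hp : 1 < p) {C η : ℝ} (hC : 0 < C)
    (hη : C * |η| ≤ 1 / 2) {Q : ℝ × ℝ} (hQ : Q ∉ Ω) {r₁ r₂ : ℝ} (hr₁ : 0 < r₁) (hr₂ : 0 < r₂)
    (hQ₁ : (Q.1 + r₁ * η, Q.2 + r₁) ∈ Ω) (hQ₂ : (Q.1 + r₂ * η, Q.2 - r₂) ∈ Ω) :
    ∃ u : ℝ × ℝ → ℝ, MemU Ω u ∧ (∃ z ∈ Ω, u z ≠ 0) ∧ C * LpN Ω p (uy u) < LpN Ω p (ux u) := by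
  obtain ⟨P, hP⟩ := hint
  obtain ⟨ρ, hρ, hball⟩ := Metric.nhds_basis_closedBall.mem_iff.1 (mem_interior_iff_mem_nhds.1 hP)
  obtain ⟨τ, hτ, hτ1, hdisj⟩ := exists_shrunk_ball_disjoint hcomp.isClosed hQ P ρ
  have hp0 : 0 < p := by linarith
  have hfin : volume Ω ≠ ∞ := hcomp.measure_lt_top.ne
  set G := Ω ∩ sector P Q ρ τ with hGdef
  have hG : 0 < volume.real G := ENNReal.toReal_pos
    (volume_inter_sector_pos hρ hball hτ hτ1).ne' (measure_ne_top_of_subset inter_subset_left hfin)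
  set D := |P.1 - Q.1| + |η| * |P.2 - Q.2| + 1 with hD
  have hD0 : 0 < D := by positivity
  obtain ⟨M, hM, hMbig⟩ : ∃ M : ℝ, 1 ≤ M ∧
      2 * (C ^ p * ((1 / ρ) ^ p * volume.real Ω)) <
        (τ / 4 * volume.real G * (1 / D) ^ p) * M ^ (p - 1) := by
    have h1 := ((tendsto_rpow_atTop (sub_pos.2 hp)).const_mul_atTop
      (show 0 < τ / 4 * volume.real G * (1 / D) ^ p by positivity))
    exact ((Filter.eventually_ge_atTop 1).and (h1.eventually_gt_atTop _)).exists
  have hM0 : 0 < M := by linarith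
  set u := envelope Ω P Q M with hu
  have hlip : LipschitzWith (M / ρ).toNNReal u := lipschitzWith_envelope hM hρ hball
  have hsteep : ∀ k ∈ supportFamily Ω P Q M, affineAt P k Q ≤ 0 → |k.2.2| ≤ |η| * |k.2.1| :=
    fun k hk => abs_snd_coeff_le hr₁ hr₂ (hk.1 _ hQ₁) (hk.1 _ hQ₂)
  have hintx : IntegrableOn (fun z => |ux u z| ^ p) Ω :=
    hlip.integrableOn_abs_fderiv_apply_rpow hp0.le (1, 0) hfin
  have hinty : IntegrableOn (fun z => |uy u z| ^ p) Ω :=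
    hlip.integrableOn_abs_fderiv_apply_rpow hp0.le (0, 1) hfin
  have hgrad : ∀ z, DifferentiableAt ℝ u z → ∃ k ∈ supportFamily Ω P Q M,
      u z = affineAt P k z ∧ ux u z = k.2.1 ∧ uy u z = k.2.2 := by
    intro z hz
    obtain ⟨k, hk, hact, hg⟩ := exists_gradient_eq hM hρ hball hz.hasFDerivAt
    exact ⟨k, hk, hact, by simp [ux, hg], by simp [uy, hg]⟩
  have hdiff : ∀ᵐ z, DifferentiableAt ℝ u z := hlip.ae_differentiableAt
  have hupper : ∫ z in Ω, |uy u z| ^ p ≤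
      (1 / ρ) ^ p * volume.real Ω + |η| ^ p * ∫ z in Ω, |ux u z| ^ p := by
    have hconst : IntegrableOn (fun _ : ℝ × ℝ => (1 / ρ) ^ p) Ω := integrableOn_const hfin
    calc ∫ z in Ω, |uy u z| ^ p
        ≤ ∫ z in Ω, ((1 / ρ) ^ p + |η| ^ p * |ux u z| ^ p) := by
          refine integral_mono_ae hinty (hconst.add (hintx.const_mul _)) ?_
          refine ae_restrict_of_ae (hdiff.mono fun z hz => ?_)
          obtain ⟨k, hk, -, hx, hy⟩ := hgrad z hz
          simp only [hx, hy]
          rcases hk.2 with ⟨hk1, -⟩ | ⟨-, hkQ⟩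
          · have h1 := abs_coeff_le hρ hball hk.1
            have h2 : |k.2.2| ≤ 1 / ρ := by
              rw [le_div_iff₀ hρ]
              nlinarith [abs_nonneg k.2.1]
            have h3 := Real.rpow_le_rpow (abs_nonneg _) h2 hp0.le
            have h4 : 0 ≤ |η| ^ p * |k.2.1| ^ p := by positivity
            linarith
          · have h3 := Real.rpow_le_rpow (abs_nonneg _) (hsteep k hk hkQ) hp0.le
            rw [Real.mul_rpow (abs_nonneg _) (abs_nonneg _)] at h3
            have h4 : 0 ≤ (1 / ρ) ^ p := by positivity
            linarith
      _ = (1 / ρ) ^ p * volume.real Ω + |η| ^ p * ∫ z in Ω, |ux u z| ^ p := by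
          rw [integral_add hconst (hintx.const_mul _), integral_const_mul, setIntegral_const,
            smul_eq_mul, mul_comm (volume.real Ω)]
  have hlower : (τ / 4 * volume.real G * (1 / D) ^ p) * M ^ (p - 1) ≤
      ∫ z in Ω, |ux u z| ^ p := by
    set s := τ / (4 * M) with hs
    have hs0 : 0 ≤ s := by positivity
    have hs1 : s < 1 := by
      rw [hs, div_lt_one (by positivity)]
      linarith
    have hsM : s * M = τ / 4 := by rw [hs]; field_simp
    have hlayer := volume_layer_ge (P := P) (Q := Q) (ρ := ρ) (τ := τ) hfin hs0 hs1.le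
    have hmarkov := mul_meas_ge_le_integral_of_nonneg
      (Filter.Eventually.of_forall fun z => by positivity) hintx ((M / D) ^ p)
    have hsub : volume.real (G \ AffineMap.homothety P (1 - s) '' G) ≤
        (volume.restrict Ω).real {z | (M / D) ^ p ≤ |ux u z| ^ p} := by
      rw [Measure.real, Measure.real, Measure.restrict_apply' hcomp.measurableSet]
      refine ENNReal.toReal_mono (measure_ne_top_of_subset inter_subset_right hfin)
        (measure_mono_ae (hdiff.mono fun z hz hzl => ⟨?_, hzl.1.1⟩))
      obtain ⟨k, hk, hact, hx, -⟩ := hgrad z hz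
      obtain ⟨hk1, hkQ⟩ := active_nonpos_of_mem_layer hM hρ hball hconv hτ hτ1 hdisj hs0 hs1
        (by linarith) hzl hk hact
      change (M / D) ^ p ≤ |ux u z| ^ p
      refine Real.rpow_le_rpow (by positivity) ?_ hp0.le
      rw [hx, div_le_iff₀ hD0]
      have hb := hsteep k hk hkQ
      have h1 : M ≤ k.2.1 * (P.1 - Q.1) + k.2.2 * (P.2 - Q.2) := by
        simp only [affineAt, hk1] at hkQ
        linarith
      have h2 : k.2.1 * (P.1 - Q.1) ≤ |k.2.1| * |P.1 - Q.1| := by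
        rw [← abs_mul]; exact le_abs_self _
      have h3 : k.2.2 * (P.2 - Q.2) ≤ |η| * |k.2.1| * |P.2 - Q.2| :=
        (le_abs_self _).trans (by rw [abs_mul]; gcongr)
      rw [hD]
      nlinarith [abs_nonneg k.2.1]
    have hpow : (τ / 4 * volume.real G * (1 / D) ^ p) * M ^ (p - 1) =
        (M / D) ^ p * (s * volume.real G) := by
      rw [Real.rpow_sub_one hM0.ne', Real.div_rpow hM0.le hD0.le, Real.div_rpow zero_le_one hD0.le,
        Real.one_rpow, hs]
      field_simp
    rw [hpow]
    exact (mul_le_mul_of_nonneg_left (hlayer.trans hsub) (by positivity)).trans hmarkov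
  refine ⟨u, memU_envelope hM hρ hball hconv hcomp.isClosed, ⟨P, interior_subset hP, ?_⟩,
    LpN_mul_lt hp0 hC.le ?_⟩
  · obtain ⟨k, hk, h⟩ := exists_envelope_eq (Q := Q) hM hρ hball P
    have h1 := (one_le_fst_of_mem hM hk).1
    have h2 : u P = k.1 := by simp [hu, h, affineAt]
    rw [h2]
    linarith
  · have hCη : C ^ p * |η| ^ p ≤ 1 / 2 := by
      rw [← Real.mul_rpow hC.le (abs_nonneg _)]
      refine (Real.rpow_le_rpow (by positivity) hη hp0.le).trans ?_
      exact (Real.rpow_le_rpow_of_exponent_ge (by norm_num) (by norm_num) hp.le).trans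
        (Real.rpow_one _).le
    have hI : 0 ≤ ∫ z in Ω, |ux u z| ^ p := integral_nonneg fun z => by positivity
    have h1 := mul_le_mul_of_nonneg_left hupper (show 0 ≤ C ^ p by positivity)
    have h2 := mul_le_mul_of_nonneg_right hCη hI
    linarith

/-- A vertical support line `x = e` of `Ω` with `Ω` on the side `σ`, touching `Ω` at `(e, c)` and
such that `Ω` contains a point seen from `(e, c)` in a nearly vertical direction. -/
theorem exists_memU_of_steep {Ω : Set (ℝ × ℝ)} (hcomp : IsCompact Ω) (hconv : Convex ℝ Ω)
    (hint : (interior Ω).Nonempty) {p : ℝ} (hp : 1 < p) {σ e c : ℝ} (hσ : σ * σ = 1)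
    (hside : ∀ z ∈ Ω, 0 ≤ σ * (z.1 - e)) (hec : (e, c) ∈ Ω)
    (hsteep : ∀ K > (0 : ℝ), ∃ z ∈ Ω, K * (σ * (z.1 - e)) < |z.2 - c|) {C : ℝ} (hC : 0 < C) :
    ∃ u : ℝ × ℝ → ℝ, MemU Ω u ∧ (∃ z ∈ Ω, u z ≠ 0) ∧ C * LpN Ω p (uy u) < LpN Ω p (ux u) := by
  obtain ⟨z, hz, hlt⟩ := hsteep (2 * C) (by positivity)
  have hX := hside z hz
  set X := σ * (z.1 - e) with hXdef
  have hzX : z.1 = e + σ * X := by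
    rw [hXdef]; linear_combination (e - z.1) * hσ
  have hσ1 : |σ| = 1 := by
    have : |σ| * |σ| = 1 := by rw [← abs_mul, hσ, abs_one]
    nlinarith [abs_nonneg σ]
  set η := σ / (2 * C) with hη
  have hηle : C * |η| ≤ 1 / 2 := by
    rw [hη, abs_div, hσ1, abs_of_pos (by positivity : 0 < 2 * C)]
    exact le_of_eq (by field_simp)
  have hση : σ * (2 * C * η) = 1 := by rw [hη]; field_simp; linarith
  have hCX : 0 ≤ 2 * C * X := by positivity
  have hηX : 2 * C * X * η = σ * X := by rw [hη]; field_simp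
  have hout : ∀ r y : ℝ, 0 < r → (e - r * η, y) ∉ Ω := by
    intro r y hr hm
    have h1 := hside _ hm
    have h2 : σ * (e - r * η - e) * (2 * C) = -r := by linear_combination (-r) * hση
    nlinarith
  rcases le_total c z.2 with h | h
  · rw [abs_of_nonneg (sub_nonneg.2 h)] at hlt
    refine exists_memU_of_visible hcomp hconv hint hp hC hηle
      (Q := (e - (z.2 - c - 2 * C * X) / 2 * η, c + (z.2 - c - 2 * C * X) / 2))
      (r₁ := (z.2 - c + 2 * C * X) / 2) (r₂ := (z.2 - c - 2 * C * X) / 2)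
      (hout _ _ (by linarith)) (by linarith) (by linarith) ?_ ?_
    · convert hz using 1
      ext
      · simp only; rw [hzX]; linear_combination hηX
      · simp only; ring
    · convert hec using 1
      ext <;> simp
  · rw [abs_of_nonpos (sub_nonpos.2 h)] at hlt
    refine exists_memU_of_visible hcomp hconv hint hp hC hηle
      (Q := (e - (c - z.2 - 2 * C * X) / 2 * η, c - (c - z.2 - 2 * C * X) / 2))
      (r₁ := (c - z.2 - 2 * C * X) / 2) (r₂ := (c - z.2 + 2 * C * X) / 2)
      (hout _ _ (by linarith)) (by linarith) (by linarith) ?_ ?_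
    · convert hec using 1
      ext <;> simp
    · convert hz using 1
      ext
      · simp only; rw [hzX]; linear_combination hηX
      · simp only; ring

/-- Theorem 6, necessity: `p ∈ (1, ∞)`; if at least one vertical line of
support of `Ω = {(x,y) : x ∈ [a,b], φ₁(x) ≤ y ≤ φ₂(x)}` is not angular (positive gap at
an endpoint, or an infinite one-sided derivative, expressed via unbounded difference
quotients), then `K_p(Ω) = ∞`: for every `C > 0` there is a nonzero `u ∈ 𝒰_Ω` with
`‖u_x‖_p > C ‖u_y‖_p`. -/
theorem stmt_12 (p : ℝ) (hp : 1 < p)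
    (a b : ℝ) (hab : a < b) (φ₁ φ₂ : ℝ → ℝ)
    (hφ₁ : ConvexOn ℝ (Icc a b) φ₁) (hφ₂ : ConcaveOn ℝ (Icc a b) φ₂)
    (hφle : ∀ x ∈ Icc a b, φ₁ x ≤ φ₂ x)
    (Ω : Set (ℝ × ℝ))
    (hΩ : Ω = {z : ℝ × ℝ | z.1 ∈ Icc a b ∧ z.2 ∈ Icc (φ₁ z.1) (φ₂ z.1)})
    (hΩc : IsCompact Ω) (hΩint : (interior Ω).Nonempty)
    (hnotang :
      φ₁ a < φ₂ a ∨ φ₁ b < φ₂ b ∨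
      (∀ C : ℝ, ∃ x ∈ Ioc a b, C < (φ₂ x - φ₂ a) / (x - a)) ∨
      (∀ C : ℝ, ∃ x ∈ Ioc a b, (φ₁ x - φ₁ a) / (x - a) < C) ∨
      (∀ C : ℝ, ∃ x ∈ Ico a b, (φ₂ b - φ₂ x) / (b - x) < C) ∨
      (∀ C : ℝ, ∃ x ∈ Ico a b, C < (φ₁ b - φ₁ x) / (b - x))) :
    ∀ C > (0 : ℝ), ∃ u : ℝ × ℝ → ℝ, MemU Ω u ∧ (∃ z ∈ Ω, u z ≠ 0) ∧
      C * LpN Ω p (uy u) < LpN Ω p (ux u) := by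
  intro C hC
  have hconv : Convex ℝ Ω := by
    rw [hΩ]
    intro z hz w hw s t hs ht hst
    refine ⟨convex_Icc a b hz.1 hw.1 hs ht hst, ?_, ?_⟩
    · refine (hφ₁.2 hz.1 hw.1 hs ht hst).trans ?_
      exact add_le_add (mul_le_mul_of_nonneg_left hz.2.1 hs) (mul_le_mul_of_nonneg_left hw.2.1 ht)
    · refine le_trans ?_ (hφ₂.2 hz.1 hw.1 hs ht hst)
      exact add_le_add (mul_le_mul_of_nonneg_left hz.2.2 hs) (mul_le_mul_of_nonneg_left hw.2.2 ht)
  have hlow : ∀ x ∈ Icc a b, (x, φ₁ x) ∈ Ω := fun x hx => by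
    rw [hΩ]; exact ⟨hx, le_rfl, hφle x hx⟩
  have hupp : ∀ x ∈ Icc a b, (x, φ₂ x) ∈ Ω := fun x hx => by
    rw [hΩ]; exact ⟨hx, hφle x hx, le_rfl⟩
  have hleft : ∀ z ∈ Ω, 0 ≤ (1 : ℝ) * (z.1 - a) := fun z hz => by
    rw [hΩ] at hz; linarith [hz.1.1]
  have hright : ∀ z ∈ Ω, 0 ≤ (-1 : ℝ) * (z.1 - b) := fun z hz => by
    rw [hΩ] at hz; linarith [hz.1.2]
  have ha : a ∈ Icc a b := left_mem_Icc.2 hab.le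
  have hb : b ∈ Icc a b := right_mem_Icc.2 hab.le
  have hσ : (1 : ℝ) * 1 = 1 := by norm_num
  have hσ' : (-1 : ℝ) * -1 = 1 := by norm_num
  rcases hnotang with h | h | h | h | h | h
  · refine exists_memU_of_steep hΩc hconv hΩint hp hσ hleft (hlow a ha) (fun K hK => ?_) hC
    refine ⟨_, hupp a ha, ?_⟩
    simpa [sub_eq_zero] using h.ne'
  · refine exists_memU_of_steep hΩc hconv hΩint hp hσ' hright (hlow b hb) (fun K hK => ?_) hC
    refine ⟨_, hupp b hb, ?_⟩
    simpa [sub_eq_zero] using h.ne'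
  · refine exists_memU_of_steep hΩc hconv hΩint hp hσ hleft (hupp a ha) (fun K hK => ?_) hC
    obtain ⟨x, hx, hlt⟩ := h K
    refine ⟨_, hupp x (Ioc_subset_Icc_self hx), ?_⟩
    rw [lt_div_iff₀ (sub_pos.2 hx.1)] at hlt
    rw [one_mul]
    exact hlt.trans_le (le_abs_self _)
  · refine exists_memU_of_steep hΩc hconv hΩint hp hσ hleft (hlow a ha) (fun K hK => ?_) hC
    obtain ⟨x, hx, hlt⟩ := h (-K)
    refine ⟨_, hlow x (Ioc_subset_Icc_self hx), ?_⟩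
    rw [div_lt_iff₀ (sub_pos.2 hx.1)] at hlt
    refine lt_of_lt_of_le ?_ (neg_le_abs _)
    linarith
  · refine exists_memU_of_steep hΩc hconv hΩint hp hσ' hright (hupp b hb) (fun K hK => ?_) hC
    obtain ⟨x, hx, hlt⟩ := h (-K)
    refine ⟨_, hupp x (Ico_subset_Icc_self hx), ?_⟩
    rw [div_lt_iff₀ (sub_pos.2 hx.2)] at hlt
    refine lt_of_lt_of_le ?_ (le_abs_self _)
    linarith
  · refine exists_memU_of_steep hΩc hconv hΩint hp hσ' hright (hlow b hb) (fun K hK => ?_) hC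
    obtain ⟨x, hx, hlt⟩ := h K
    refine ⟨_, hlow x (Ico_subset_Icc_self hx), ?_⟩
    rw [lt_div_iff₀ (sub_pos.2 hx.2)] at hlt
    refine lt_of_lt_of_le ?_ (neg_le_abs _)
    linarith
end

section
/- Let p ∈ (1, ∞). Write Ω = {(x, y) : x ∈ [a, b], φ₁(x) ≤ y ≤ φ₂(x)} with φ₁ convex and φ₂ concave on [a, b]. Suppose both vertical lines of support of Ω are angular, i.e. φ₁(a) = φ₂(a), φ₁(b) = φ₂(b), and the one-sided derivatives φ₁'(a+), φ₂'(a+), φ₁'(b−), φ₂'(b−) are all finite. Then there exists a constant M < ∞ such that ‖u_x‖_p ≤ M ‖u_y‖_p for every u ∈ 𝒰_Ω; that is, K_p(Ω) = sup{ ‖u_x‖_p / ‖u_y‖_p : u ∈ 𝒰_Ω, u ≢ 0 } < ∞. -/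
open Set MeasureTheory
open scoped ENNReal

/-- A concave function lies below its tangent hyperplanes. -/
lemma ConcaveOn.le_add_fderiv {E : Type*} [NormedAddCommGroup E] [NormedSpace ℝ E] {s : Set E}
    {u : E → ℝ} (hu : ConcaveOn ℝ s u) {z w : E} (hz : z ∈ s) (hw : w ∈ s) {g : E →L[ℝ] ℝ}
    (hg : HasFDerivAt u g z) : u w ≤ u z + g (w - z) := by
  have hconc := hu.comp_affineMap (AffineMap.lineMap (k := ℝ) z w)
  have hline : HasDerivAt (AffineMap.lineMap z w : ℝ → E) (w - z) 0 :=
    AffineMap.hasDerivAt_lineMap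
  have hderiv : HasDerivAt (u ∘ (AffineMap.lineMap z w : ℝ → E)) (g (w - z)) 0 := by
    refine HasFDerivAt.comp_hasDerivAt (0 : ℝ) ?_ hline
    simpa using hg
  have h := hconc.slope_le_of_hasDerivAt (x := 0) (y := 1) (by simpa using hz)
    (by simpa using hw) one_pos hderiv
  rw [slope_def_field] at h
  simp only [Function.comp_apply, AffineMap.lineMap_apply_one, AffineMap.lineMap_apply_zero,
    sub_zero, div_one] at h
  linarith

/-- A concave function of finitely many variables is differentiable almost everywhere in the
interior of its domain. -/
lemma ConcaveOn.ae_differentiableAt_interior {E : Type*} [NormedAddCommGroup E]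
    [NormedSpace ℝ E] [FiniteDimensional ℝ E] [MeasurableSpace E] [BorelSpace E]
    (μ : Measure E) [μ.IsAddHaarMeasure] {s : Set E} {u : E → ℝ} (hu : ConcaveOn ℝ s u) :
    ∀ᵐ z ∂μ, z ∈ interior s → DifferentiableAt ℝ u z := by
  have hlip := hu.locallyLipschitzOn_interior
  rw [ae_iff]
  refine measure_null_of_locally_null _ fun z hz => ?_
  simp only [mem_ofPred_eq, Classical.not_imp] at hz
  obtain ⟨K, t, ht, hK⟩ := hlip hz.1
  rw [isOpen_interior.nhdsWithin_eq hz.1] at ht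
  refine ⟨_, Filter.inter_mem self_mem_nhdsWithin
    (mem_nhdsWithin_of_mem_nhds (interior_mem_nhds.2 ht)), ?_⟩
  refine measure_mono_null ?_ (ae_iff.1 (hK.ae_differentiableWithinAt_of_mem (μ := μ)))
  rintro w ⟨hw, hwt⟩ hdiff
  simp only [mem_ofPred_eq, Classical.not_imp] at hw
  exact hw.2 ((hdiff (interior_subset hwt)).differentiableAt (mem_interior_iff_mem_nhds.1 hwt))

/-- A concave function vanishing at the left end of an interval is bounded by the integral of
the absolute value of its derivative. -/
lemma ConcaveOn.le_setIntegral_abs_of_ae_hasDerivAt {f g : ℝ → ℝ} {c d : ℝ}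
    (hf : ConcaveOn ℝ (Icc c d) f) (hcont : ContinuousOn f (Icc c d)) (hc : f c = 0)
    (hg : IntegrableOn g (Icc c d)) (hderiv : ∀ᵐ y, y ∈ Icc c d → HasDerivAt f (g y) y)
    {y : ℝ} (hy : y ∈ Icc c d) : f y ≤ ∫ t in Icc c d, |g t| := by
  have hsub : Icc c y ⊆ Icc c d := Icc_subset_Icc_right hy.2
  let r : ℝ → ℝ := fun t => -derivWithin (-f) (Ioi t) t
  have hr : ∀ t ∈ Ioo c y, HasDerivWithinAt f (r t) (Ioi t) t := by
    intro t ht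
    have hinside : t ∈ interior (Icc c d) := by
      rw [interior_Icc]; exact ⟨ht.1, ht.2.trans_le hy.2⟩
    simpa [r] using (hf.neg.hasDerivWithinAt_rightDeriv_of_mem_interior hinside).neg
  have heq : ∀ᵐ t, t ∈ Ioc c y → g t = r t := by
    filter_upwards [hderiv, compl_mem_ae_iff.2 (measure_singleton y)] with t ht hty htm
    have hlt : t < y := lt_of_le_of_ne htm.2 hty
    exact (uniqueDiffWithinAt_Ioi t).eq_deriv _
      (ht (hsub ⟨htm.1.le, htm.2⟩)).hasDerivWithinAt (hr t ⟨htm.1, hlt⟩)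
  have heq' : g =ᵐ[volume.restrict (Ioc c y)] r :=
    (ae_restrict_iff' measurableSet_Ioc).2 heq
  have hgi : IntegrableOn g (Ioc c y) := hg.mono_set (Ioc_subset_Icc_self.trans hsub)
  have hri : IntervalIntegrable r volume c y :=
    (intervalIntegrable_iff_integrableOn_Ioc_of_le hy.1).2 (hgi.congr heq')
  have hftc := intervalIntegral.integral_eq_sub_of_hasDeriv_right_of_le hy.1
    (hcont.mono hsub) hr hri
  rw [hc, sub_zero, intervalIntegral.integral_of_le hy.1, ← integral_congr_ae heq'] at hftc
  calc f y = ∫ t in Ioc c y, g t := hftc.symm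
    _ ≤ ∫ t in Ioc c y, |g t| := integral_mono hgi hgi.abs fun t => le_abs_self _
    _ ≤ ∫ t in Icc c d, |g t| := setIntegral_mono_set hg.abs
        (ae_of_all _ fun t => abs_nonneg _)
        (Ioc_subset_Icc_self.trans hsub).eventuallyLE

lemma Real.add_rpow_le_two_rpow_mul {A B p : ℝ} (hA : 0 ≤ A) (hB : 0 ≤ B) (hp : 0 ≤ p) :
    (A + B) ^ p ≤ 2 ^ p * (A ^ p + B ^ p) := by
  have hApow := Real.rpow_nonneg hA p
  have hBpow := Real.rpow_nonneg hB p
  have h2 : (0 : ℝ) ≤ 2 ^ p := by positivity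
  rcases le_total A B with h | h
  · calc (A + B) ^ p ≤ (2 * B) ^ p := Real.rpow_le_rpow (by linarith) (by linarith) hp
      _ = 2 ^ p * B ^ p := Real.mul_rpow (by norm_num) hB
      _ ≤ _ := by gcongr; linarith
  · calc (A + B) ^ p ≤ (2 * A) ^ p := Real.rpow_le_rpow (by linarith) (by linarith) hp
      _ = 2 ^ p * A ^ p := Real.mul_rpow (by norm_num) hA
      _ ≤ _ := by gcongr; linarith

/-- If `|h|` is controlled by `|g|` plus the mean of `|g|` on an interval, then the integral of
`|h| ^ p` is controlled by that of `|g| ^ p`. -/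
lemma setIntegral_abs_rpow_le_of_le_add_mean {p L c d : ℝ} (hp : 1 ≤ p) (hL : 0 ≤ L)
    (hcd : c < d) {g h : ℝ → ℝ} (hg : IntegrableOn g (Icc c d))
    (hgp : IntegrableOn (fun y => |g y| ^ p) (Icc c d))
    (hh : ∀ᵐ y, y ∈ Icc c d → |h y| ≤ L * (|g y| + (∫ t in Icc c d, |g t|) / (d - c))) :
    ∫ y in Icc c d, |h y| ^ p ≤ (L ^ p * 2 ^ p * 2) * ∫ y in Icc c d, |g y| ^ p := by
  have hp0 : 0 ≤ p := zero_le_one.trans hp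
  have hdc : 0 < d - c := sub_pos.2 hcd
  set S := ∫ t in Icc c d, |g t| with hS
  have hS0 : 0 ≤ S := integral_nonneg fun t => abs_nonneg _
  have hjensen : (S / (d - c)) ^ p ≤ (∫ y in Icc c d, |g y| ^ p) / (d - c) := by
    have hj := (convexOn_rpow hp).map_set_average_le (μ := volume) (t := Icc c d)
      (f := fun y => |g y|) (Real.continuous_rpow_const hp0).continuousOn isClosed_Ici
      (by simp [hcd]) (by simp) (ae_of_all _ fun y => abs_nonneg (g y)) hg.abs hgp
    simpa [setAverage_eq, measureReal_def, hdc.le, ← hS, div_eq_inv_mul, Function.comp_def]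
      using hj
  have hconst : IntegrableOn (fun _ : ℝ => (S / (d - c)) ^ p) (Icc c d) := by
    simp [integrableOn_const_iff]
  calc ∫ y in Icc c d, |h y| ^ p
      ≤ ∫ y in Icc c d, L ^ p * 2 ^ p * (|g y| ^ p + (S / (d - c)) ^ p) := by
        refine integral_mono_of_nonneg (ae_of_all _ fun y => by positivity)
          ((hgp.add hconst).const_mul _) ?_
        rw [Filter.EventuallyLE, ae_restrict_iff' measurableSet_Icc]
        filter_upwards [hh] with y hy hym
        calc |h y| ^ p ≤ (L * (|g y| + S / (d - c))) ^ p :=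
              Real.rpow_le_rpow (abs_nonneg _) (hy hym) hp0
          _ = L ^ p * (|g y| + S / (d - c)) ^ p := Real.mul_rpow hL (by positivity)
          _ ≤ L ^ p * (2 ^ p * (|g y| ^ p + (S / (d - c)) ^ p)) := by
              gcongr
              exact Real.add_rpow_le_two_rpow_mul (abs_nonneg _) (by positivity) hp0
          _ = _ := by ring
    _ = L ^ p * 2 ^ p * ((∫ y in Icc c d, |g y| ^ p) + (d - c) * (S / (d - c)) ^ p) := by
        rw [integral_const_mul, integral_add hgp hconst]
        simp [measureReal_def, hdc.le]
    _ ≤ L ^ p * 2 ^ p * ((∫ y in Icc c d, |g y| ^ p) + ∫ y in Icc c d, |g y| ^ p) := by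
        gcongr
        rwa [le_div_iff₀' hdc] at hjensen
    _ = _ := by ring

/-- A point of a planar set below which there is no point of the set lies on the frontier. -/
lemma mem_frontier_of_forall_below_notMem {s : Set (ℝ × ℝ)} {x y : ℝ} (hz : (x, y) ∈ s)
    (hbelow : ∀ t > 0, (x, y - t) ∉ s) : (x, y) ∈ frontier s := by
  refine ⟨subset_closure hz, fun hinside => ?_⟩
  have hcont : Filter.Tendsto (fun t : ℝ => (x, y - t)) (nhdsWithin 0 (Ioi 0)) (nhds (x, y)) := by
    have hc : Continuous fun t : ℝ => (x, y - t) := by fun_prop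
    simpa using hc.continuousAt (x := (0 : ℝ)) |>.tendsto.mono_left nhdsWithin_le_nhds
  obtain ⟨t, ht, ht0⟩ := ((hcont.eventually (mem_interior_iff_mem_nhds.1 hinside)).and
    self_mem_nhdsWithin).exists
  exact hbelow t ht0 ht

/-- Over a point of `[a, b]` the region between a convex and a concave function that agree at
both ends and have finite one-sided derivatives there lies in cones with apices at the ends. -/
lemma cone_bounds_of_angular {a b : ℝ} {φ₁ φ₂ : ℝ → ℝ}
    (hφ₁ : ConvexOn ℝ (Icc a b) φ₁) (hφ₂ : ConcaveOn ℝ (Icc a b) φ₂)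
    (heqa : φ₁ a = φ₂ a) (heqb : φ₁ b = φ₂ b) {d1a d2a d1b d2b : ℝ}
    (h1a : HasDerivWithinAt φ₁ d1a (Ici a) a) (h2a : HasDerivWithinAt φ₂ d2a (Ici a) a)
    (h1b : HasDerivWithinAt φ₁ d1b (Iic b) b) (h2b : HasDerivWithinAt φ₂ d2b (Iic b) b)
    {x : ℝ} (hx : x ∈ Ioo a b) :
    (φ₂ x - φ₁ x ≤ (|d1a| + |d2a| + |d1b| + |d2b|) * (x - a) ∧
      φ₂ x - φ₁ x ≤ (|d1a| + |d2a| + |d1b| + |d2b|) * (b - x)) ∧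
    ∀ y ∈ Icc (φ₁ x) (φ₂ x), |φ₁ a - y| ≤ (|d1a| + |d2a| + |d1b| + |d2b|) * (x - a) ∧
      |φ₁ b - y| ≤ (|d1a| + |d2a| + |d1b| + |d2b|) * (b - x) := by
  have hab : a ≤ b := (hx.1.trans hx.2).le
  have hxm : x ∈ Icc a b := ⟨hx.1.le, hx.2.le⟩
  have ham : a ∈ Icc a b := left_mem_Icc.2 hab
  have hbm : b ∈ Icc a b := right_mem_Icc.2 hab
  have hxa : 0 < x - a := sub_pos.2 hx.1
  have hbx : 0 < b - x := sub_pos.2 hx.2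
  have k1a := hφ₁.le_slope_of_hasDerivWithinAt_Ioi ham hxm hx.1 (h1a.mono Ioi_subset_Ici_self)
  have k2a := hφ₂.slope_le_of_hasDerivWithinAt_Ioi ham hxm hx.1 (h2a.mono Ioi_subset_Ici_self)
  have k1b := hφ₁.slope_le_of_hasDerivWithinAt_Iio hxm hbm hx.2 (h1b.mono Iio_subset_Iic_self)
  have k2b := hφ₂.le_slope_of_hasDerivWithinAt_Iio hxm hbm hx.2 (h2b.mono Iio_subset_Iic_self)
  rw [slope_def_field, le_div_iff₀ hxa] at k1a
  rw [slope_def_field, div_le_iff₀ hxa] at k2a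
  rw [slope_def_field, div_le_iff₀ hbx] at k1b
  rw [slope_def_field, le_div_iff₀ hbx] at k2b
  have abs_bounds (c t : ℝ) (ht : 0 < t) : c * t ≤ |c| * t ∧ -(c * t) ≤ |c| * t ∧ 0 ≤ |c| * t :=
    ⟨by gcongr; exact le_abs_self c, by rw [← neg_mul]; gcongr; exact neg_le_abs c,
      by positivity⟩
  obtain ⟨p1, p2, p3⟩ := abs_bounds d1a _ hxa
  obtain ⟨q1, q2, q3⟩ := abs_bounds d2a _ hxa
  obtain ⟨r1, r2, r3⟩ := abs_bounds d1b _ hbx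
  obtain ⟨s1, s2, s3⟩ := abs_bounds d2b _ hbx
  obtain ⟨-, -, p4⟩ := abs_bounds d1a _ hbx
  obtain ⟨-, -, q4⟩ := abs_bounds d2a _ hbx
  obtain ⟨-, -, r4⟩ := abs_bounds d1b _ hxa
  obtain ⟨-, -, s4⟩ := abs_bounds d2b _ hxa
  simp only [add_mul]
  refine ⟨⟨by linarith, by linarith⟩, fun y hy => ⟨?_, ?_⟩⟩ <;>
    · rw [abs_le]
      constructor <;> linarith [hy.1, hy.2]

/-- If the tangent plane of `u` at a point is nonnegative at two points to the left and to the
right, both within cones of slope `L`, then the horizontal slope is controlled by the vertical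
one and the value of `u`. -/
lemma abs_le_of_tangent_nonneg {L ℓ S v α β s t c d : ℝ} (hℓ : 0 < ℓ) (hS : 0 ≤ S)
    (hv : v ≤ S) (hs : 0 < s) (ht : 0 < t) (hℓs : ℓ ≤ L * s) (hℓt : ℓ ≤ L * t)
    (hc : |c| ≤ L * s) (hd : |d| ≤ L * t)
    (hleft : 0 ≤ v - α * s + β * c) (hright : 0 ≤ v + α * t + β * d) :
    |α| ≤ L * (|β| + S / ℓ) := by
  have key : ∀ r e : ℝ, 0 < r → ℓ ≤ L * r → |e| ≤ L * r → ∀ γ : ℝ, γ * r ≤ v + β * e →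
      γ ≤ L * (|β| + S / ℓ) := by
    intro r e hr hℓr her γ hγ
    have hβ : β * e ≤ |β| * (L * r) := by
      calc β * e ≤ |β * e| := le_abs_self _
        _ = |β| * |e| := abs_mul _ _
        _ ≤ _ := by gcongr
    have hSr : S ≤ S / ℓ * (L * r) := by
      calc S = S / ℓ * ℓ := by field_simp
        _ ≤ _ := by gcongr
    refine le_of_mul_le_mul_right ?_ hr
    calc γ * r ≤ S / ℓ * (L * r) + |β| * (L * r) := by linarith
      _ = _ := by ring
  exact abs_le'.2 ⟨key s c hs hℓs hc α (by linarith), key t d ht hℓt hd (-α) (by linarith)⟩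

/-- Theorem 6, sufficiency: `p ∈ (1, ∞)`; if both vertical lines of support
of `Ω = {(x,y) : x ∈ [a,b], φ₁(x) ≤ y ≤ φ₂(x)}` are angular (`φ₁(a) = φ₂(a)`,
`φ₁(b) = φ₂(b)`, and the four one-sided derivatives exist as finite reals), then there is
a constant `M` with `‖u_x‖_p ≤ M ‖u_y‖_p` for all `u ∈ 𝒰_Ω`. -/
theorem stmt_13 (p : ℝ) (hp : 1 < p)
    (a b : ℝ) (hab : a < b) (φ₁ φ₂ : ℝ → ℝ)
    (hφ₁ : ConvexOn ℝ (Icc a b) φ₁) (hφ₂ : ConcaveOn ℝ (Icc a b) φ₂)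
    (hφle : ∀ x ∈ Icc a b, φ₁ x ≤ φ₂ x)
    (Ω : Set (ℝ × ℝ))
    (hΩ : Ω = {z : ℝ × ℝ | z.1 ∈ Icc a b ∧ z.2 ∈ Icc (φ₁ z.1) (φ₂ z.1)})
    (hΩc : IsCompact Ω) (hΩint : (interior Ω).Nonempty)
    (heqa : φ₁ a = φ₂ a) (heqb : φ₁ b = φ₂ b)
    (d1a d2a d1b d2b : ℝ)
    (h1a : HasDerivWithinAt φ₁ d1a (Ici a) a) (h2a : HasDerivWithinAt φ₂ d2a (Ici a) a)
    (h1b : HasDerivWithinAt φ₁ d1b (Iic b) b) (h2b : HasDerivWithinAt φ₂ d2b (Iic b) b) :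
    ∃ M : ℝ, ∀ u : ℝ × ℝ → ℝ, MemU Ω u → LpN Ω p (ux u) ≤ M * LpN Ω p (uy u) := by
  have hp0 : 0 < p := one_pos.trans hp
  set L := |d1a| + |d2a| + |d1b| + |d2b|
  have hL : 0 ≤ L := by positivity
  set K := L ^ p * 2 ^ p * 2
  have hK : 0 ≤ K := by positivity
  refine ⟨K ^ (1 / p), fun u ⟨hcont, hconc, hzero, C, hC⟩ => ?_⟩
  have hmem : ∀ x y, (x, y) ∈ Ω ↔ x ∈ Icc a b ∧ y ∈ Icc (φ₁ x) (φ₂ x) := fun x y => by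
    rw [hΩ]; rfl
  have hΩm : MeasurableSet Ω := hΩc.measurableSet
  have hlower : ∀ x ∈ Icc a b, (x, φ₁ x) ∈ Ω ∧ u (x, φ₁ x) = 0 := by
    intro x hx
    have hxΩ : (x, φ₁ x) ∈ Ω := (hmem _ _).2 ⟨hx, le_rfl, hφle x hx⟩
    refine ⟨hxΩ, hzero _ (mem_frontier_of_forall_below_notMem hxΩ fun t ht h => ?_)⟩
    linarith [((hmem _ _).1 h).2.1]
  have hgood : ∀ᵐ z : ℝ × ℝ, z ∈ Ω → z ∈ interior Ω ∧ DifferentiableAt ℝ u z := by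
    filter_upwards [hconc.ae_differentiableAt_interior volume,
      compl_mem_ae_iff.2 (hconc.1.addHaar_frontier volume)] with z hz hzf hzΩ
    have hzi : z ∈ interior Ω := by
      by_contra h
      exact hzf ⟨subset_closure hzΩ, h⟩
    exact ⟨hzi, hz hzi⟩
  have hbound : ∀ᵐ z : ℝ × ℝ, z ∈ Ω → ‖fderiv ℝ u z‖ ≤ C := by
    filter_upwards [hgood] with z hz hzΩ
    exact hC z (hz hzΩ).1 _ (hz hzΩ).2.hasFDerivAt
  have hpow : ∀ v : ℝ × ℝ, ‖v‖ ≤ 1 →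
      IntegrableOn (fun z => |fderiv ℝ u z v| ^ p) Ω := by
    intro v hv
    refine IntegrableOn.of_bound hΩc.measure_lt_top ?_ (C ^ p) ?_
    · exact ((measurable_fderiv_apply_const ℝ u v).abs.pow_const p).aestronglyMeasurable
    · rw [ae_restrict_iff' hΩm]
      filter_upwards [hbound] with z hz hzΩ
      rw [Real.norm_of_nonneg (by positivity)]
      refine Real.rpow_le_rpow (abs_nonneg _) ?_ hp0.le
      exact ((fderiv ℝ u z).unit_le_opNorm v hv).trans (hz hzΩ)
  have hslice : ∀ (F : ℝ × ℝ → ℝ), ∀ x ∈ Icc a b,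
      (fun y => Ω.indicator F (x, y)) = (Icc (φ₁ x) (φ₂ x)).indicator fun y => F (x, y) := by
    intro F x hx
    funext y
    by_cases hy : y ∈ Icc (φ₁ x) (φ₂ x)
    · rw [indicator_of_mem hy, indicator_of_mem ((hmem x y).2 ⟨hx, hy⟩)]
    · rw [indicator_of_notMem hy, indicator_of_notMem fun h => hy ((hmem x y).1 h).2]
  have hmain : ∀ᵐ x, ∫ y, Ω.indicator (fun z => |ux u z| ^ p) (x, y) ≤
      K * ∫ y, Ω.indicator (fun z => |uy u z| ^ p) (x, y) := by
    have hgood' := Measure.ae_ae_of_ae_prod (Measure.volume_eq_prod ℝ ℝ ▸ hgood)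
    filter_upwards [hgood', compl_mem_ae_iff.2 (measure_singleton a),
      compl_mem_ae_iff.2 (measure_singleton b)] with x hxgood hxa hxb
    by_cases hx : x ∈ Icc a b
    swap
    · have hout : ∀ y, (x, y) ∉ Ω := fun y h => hx ((hmem x y).1 h).1
      simp [indicator_of_notMem (hout _)]
    have hxo : x ∈ Ioo a b := ⟨lt_of_le_of_ne hx.1 (Ne.symm hxa), lt_of_le_of_ne hx.2 hxb⟩
    rw [hslice _ x hx, hslice _ x hx, integral_indicator measurableSet_Icc,
      integral_indicator measurableSet_Icc]
    rcases (hφle x hx).eq_or_lt with heq | hlt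
    · simp [heq]
    have hyΩ : ∀ y ∈ Icc (φ₁ x) (φ₂ x), (x, y) ∈ Ω := fun y hy => (hmem x y).2 ⟨hx, hy⟩
    have hyb : ∀ᵐ y, y ∈ Icc (φ₁ x) (φ₂ x) → |uy u (x, y)| ≤ C := by
      filter_upwards [hxgood] with y hy hym
      obtain ⟨hyi, hyd⟩ := hy (hyΩ y hym)
      exact ((fderiv ℝ u (x, y)).unit_le_opNorm (0, 1) (by simp)).trans
        (hC _ hyi _ hyd.hasFDerivAt)
    have hymeas : Measurable fun y => uy u (x, y) :=
      (measurable_fderiv_apply_const ℝ u (0, 1)).comp measurable_prodMk_left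
    have hg : IntegrableOn (fun y => uy u (x, y)) (Icc (φ₁ x) (φ₂ x)) := by
      refine IntegrableOn.of_bound measure_Icc_lt_top hymeas.aestronglyMeasurable C ?_
      rw [ae_restrict_iff' measurableSet_Icc]
      exact hyb
    have hgp : IntegrableOn (fun y => |uy u (x, y)| ^ p) (Icc (φ₁ x) (φ₂ x)) := by
      refine IntegrableOn.of_bound measure_Icc_lt_top
        (hymeas.abs.pow_const p).aestronglyMeasurable (C ^ p) ?_
      rw [ae_restrict_iff' measurableSet_Icc]
      filter_upwards [hyb] with y hy hym
      rw [Real.norm_of_nonneg (by positivity)]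
      exact Real.rpow_le_rpow (abs_nonneg _) (hy hym) hp0.le
    have hderiv : ∀ᵐ y, y ∈ Icc (φ₁ x) (φ₂ x) →
        HasDerivAt (fun y => u (x, y)) (uy u (x, y)) y := by
      filter_upwards [hxgood] with y hy hym
      exact (hy (hyΩ y hym)).2.hasFDerivAt.comp_hasDerivAt y
        ((hasDerivAt_const y x).prodMk (hasDerivAt_id y))
    have hfcont : ContinuousOn (fun y => u (x, y)) (Icc (φ₁ x) (φ₂ x)) :=
      hcont.comp (by fun_prop) hyΩ
    have hfconc : ConcaveOn ℝ (Icc (φ₁ x) (φ₂ x)) fun y => u (x, y) := by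
      refine ⟨convex_Icc _ _, fun y hy y' hy' s t hs ht hst => ?_⟩
      have h := hconc.2 (hyΩ y hy) (hyΩ y' hy') hs ht hst
      simpa [← add_mul, hst] using h
    obtain ⟨⟨hℓa, hℓb⟩, hcone⟩ :=
      cone_bounds_of_angular hφ₁ hφ₂ heqa heqb h1a h2a h1b h2b hxo
    refine setIntegral_abs_rpow_le_of_le_add_mean hp.le hL hlt hg hgp ?_
    filter_upwards [hxgood] with y hy hym
    have hdiff := (hy (hyΩ y hym)).2.hasFDerivAt
    have hle := hfconc.le_setIntegral_abs_of_ae_hasDerivAt hfcont (hlower x hx).2 hg hderiv hym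
    have hexpand : ∀ s t : ℝ, fderiv ℝ u (x, y) (s, t) = ux u (x, y) * s + uy u (x, y) * t := by
      intro s t
      have hst : (s, t) = s • ((1 : ℝ), (0 : ℝ)) + t • ((0 : ℝ), (1 : ℝ)) := by simp
      rw [hst, map_add, map_smul, map_smul, smul_eq_mul, smul_eq_mul, ux, uy]
      ring
    have htangent : ∀ w ∈ Icc a b, 0 ≤ u (x, y) + ux u (x, y) * (w - x) +
        uy u (x, y) * (φ₁ w - y) := by
      intro w hw
      have h := hconc.le_add_fderiv (hyΩ y hym) (hlower w hw).1 hdiff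
      rw [(hlower w hw).2, Prod.mk_sub_mk, hexpand] at h
      linarith
    have hleft := htangent a (left_mem_Icc.2 hab.le)
    have hright := htangent b (right_mem_Icc.2 hab.le)
    exact abs_le_of_tangent_nonneg (sub_pos.2 hlt) (integral_nonneg fun t => abs_nonneg _) hle
      (sub_pos.2 hxo.1) (sub_pos.2 hxo.2) hℓa hℓb (hcone y hym).1 (hcone y hym).2
      (by linarith) hright
  have hfub : ∀ F : ℝ × ℝ → ℝ, IntegrableOn F Ω →
      Integrable (fun x => ∫ y, Ω.indicator F (x, y)) ∧
      ∫ z in Ω, F z = ∫ x, ∫ y, Ω.indicator F (x, y) := by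
    intro F hF
    have hFi : Integrable (Ω.indicator F) (volume.prod volume) :=
      (integrable_indicator_iff hΩm).2 hF
    exact ⟨hFi.integral_prod_left, by
      rw [← integral_indicator hΩm, Measure.volume_eq_prod, integral_prod _ hFi]⟩
  obtain ⟨hxi, hxe⟩ := hfub _ (hpow (1, 0) (by simp))
  obtain ⟨hyi, hye⟩ := hfub _ (hpow (0, 1) (by simp))
  have hle_int : ∫ z in Ω, |ux u z| ^ p ≤ K * ∫ z in Ω, |uy u z| ^ p := by
    simp only [ux, uy] at hmain ⊢
    rw [hxe, hye, ← integral_const_mul]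
    exact integral_mono_ae hxi (hyi.const_mul K) hmain
  have hnonneg : ∀ f : ℝ × ℝ → ℝ, 0 ≤ ∫ z in Ω, |f z| ^ p :=
    fun f => integral_nonneg fun z => by positivity
  rw [LpN, LpN, ← Real.mul_rpow hK (hnonneg _)]
  exact Real.rpow_le_rpow (hnonneg _) hle_int (by positivity)
end

section
/- Suppose the orthogonal projection of Ω onto the x-axis is the segment [0, 2], and Ω ∩ {x = 0} = {(0,0)} and Ω ∩ {x = 2} = {(2,0)} (so (0,0) and (2,0) are the extreme left and right points of Ω). Let u ∈ 𝒰_Ω. Then at every point (x, y) ∈ Ω with 0 < x ≤ 1 at which u is differentiable, one has |u_x(x, y)| ≤ (1/x) · ( u(x, y) − y · u_y(x, y) ). -/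
open Set MeasureTheory
open scoped ENNReal

open Filter Topology in
/-- A concave function lies below its tangent plane, at every point of its domain (boundary
points included) at which it is differentiable. -/
theorem ConcaveOn.le_add_of_hasFDerivAt {E : Type*} [NormedAddCommGroup E] [NormedSpace ℝ E]
    {s : Set E} {f : E → ℝ} (hf : ConcaveOn ℝ s f) {z w : E} (hz : z ∈ s) (hw : w ∈ s)
    {g : E →L[ℝ] ℝ} (hg : HasFDerivAt f g z) : f w ≤ f z + g (w - z) := by
  have hlim := (hg.hasLineDerivAt (w - z)).tendsto_slope_zero_right
  suffices f w - f z ≤ g (w - z) by linarith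
  refine ge_of_tendsto hlim ?_
  filter_upwards [Ioo_mem_nhdsGT (zero_lt_one' ℝ)] with t ht
  have hconc := hf.2 hz hw (sub_nonneg.2 ht.2.le) ht.1.le (sub_add_cancel 1 t)
  have hpoint : (1 - t) • z + t • w = z + t • (w - z) := by module
  rw [hpoint] at hconc
  simp only [smul_eq_mul] at hconc ⊢
  rw [inv_mul_eq_div, le_div_iff₀ ht.1]
  linarith

/-- A point of a planar set whose abscissa is not interior to an interval containing the
projection of the set lies on the boundary of the set. -/
theorem mem_frontier_of_image_fst_subset_Icc {s : Set (ℝ × ℝ)} {a b : ℝ}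
    (hs : Prod.fst '' s ⊆ Icc a b) {z : ℝ × ℝ} (hz : z ∈ s) (hza : z.1 ∉ Ioo a b) :
    z ∈ frontier s := by
  refine ⟨subset_closure hz, fun hint => hza ?_⟩
  rw [← interior_Icc]
  exact interior_maximal ((image_mono interior_subset).trans hs)
    (isOpenMap_fst _ isOpen_interior) (mem_image_of_mem _ hint)

/-- Lemma 2: if `Ω` projects onto `[0,2]` on the `x`-axis with extreme left
and right points `(0,0)` and `(2,0)`, then for every `u ∈ 𝒰_Ω`, at every point
`(x,y) ∈ Ω` with `0 < x ≤ 1` where `u` is differentiable one has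
`|u_x| ≤ (1/x)(u - y u_y)`. -/
theorem stmt_14 (Ω : Set (ℝ × ℝ)) (hΩc : IsCompact Ω) (hΩconv : Convex ℝ Ω)
    (hΩint : (interior Ω).Nonempty)
    (hproj : (fun z : ℝ × ℝ => z.1) '' Ω = Icc 0 2)
    (hleft : Ω ∩ {z : ℝ × ℝ | z.1 = 0} = {((0 : ℝ), (0 : ℝ))})
    (hright : Ω ∩ {z : ℝ × ℝ | z.1 = 2} = {((2 : ℝ), (0 : ℝ))})
    (u : ℝ × ℝ → ℝ) (hu : MemU Ω u) :
    ∀ z ∈ Ω, 0 < z.1 → z.1 ≤ 1 → ∀ g : (ℝ × ℝ) →L[ℝ] ℝ, HasFDerivAt u g z →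
      |g (1, 0)| ≤ (1 / z.1) * (u z - z.2 * g (0, 1)) := by
  intro z hz hz0 hz1 g hg
  obtain ⟨-, hconc, hbdry, -⟩ := hu
  have hl : ((0 : ℝ), (0 : ℝ)) ∈ Ω := (hleft.symm.subset (mem_singleton _)).1
  have hr : ((2 : ℝ), (0 : ℝ)) ∈ Ω := (hright.symm.subset (mem_singleton _)).1
  have hul := hbdry _ (mem_frontier_of_image_fst_subset_Icc hproj.subset hl (by simp))
  have hur := hbdry _ (mem_frontier_of_image_fst_subset_Icc hproj.subset hr (by simp))
  have hg_apply (w : ℝ × ℝ) : g w = w.1 * g (1, 0) + w.2 * g (0, 1) := by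
    rw [← smul_eq_mul, ← smul_eq_mul, ← map_smul, ← map_smul, ← map_add]
    simp
  have htl := hconc.le_add_of_hasFDerivAt hz hl hg
  have htr := hconc.le_add_of_hasFDerivAt hz hr hg
  rw [hul, hg_apply, Prod.fst_sub, Prod.snd_sub] at htl
  rw [hur, hg_apply, Prod.fst_sub, Prod.snd_sub] at htr
  rw [one_div, inv_mul_eq_div, le_div_iff₀ hz0]
  rcases abs_cases (g (1, 0)) with ⟨h, -⟩ | ⟨h, hneg⟩ <;> rw [h] <;> nlinarith
end
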